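/- Let Ω ⊂ ℝ² be diffeomorphic to an annulus and let ω be smooth on the closure of Ω, locally constant on ∂Ω, with no critical points. Let ω_ε be a smooth family with ω₀ = ω and ν = (∂/∂ε)|_{ε=0}ω_ε, with ν = 0 on ∂Ω. Then (d/dε)|_{ε=0} A_{ω_ε} = 0 if and only if ∫_{{ω=λ}} ν/|∇ω| dl = 0 for every λ in the range of ω, which in turn holds if and only if ν = {ω, α} for some smooth stream function α (constant on each boundary component). -/

import Mathlib

open MeasureTheory Set
noncomputable section

abbrev E2 : Type := EuclideanSpace ℝ (Fin 2)

def pd (i : Fin 2) (f : E2 → ℝ) (x : E2) : ℝ :=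
  fderiv ℝ f x (EuclideanSpace.single i (1:ℝ))

def pb (f g : E2 → ℝ) (x : E2) : ℝ :=
  pd 0 f x * pd 1 g x - pd 1 f x * pd 0 g x

/-- arc-length integral of u over the level set {ω = λ} -/
def Jint (Ω : Set E2) (ω u : E2 → ℝ) (lam : ℝ) : ℝ :=
  ∫ x in {x ∈ closure Ω | ω x = lam}, u x ∂(μH[1] : Measure E2)

/-- the closed annulus {1 ≤ ‖x‖ ≤ 2} -/
def stdAnnulus : Set E2 := {x : E2 | 1 ≤ ‖x‖ ∧ ‖x‖ ≤ 2}

open Filter Topology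

local notation "∞" => ((⊤ : ℕ∞) : WithTop ℕ∞)

/-!
A function without critical points on a closed annulus `K`, constant on each boundary component,
maps `K` onto an interval `[a, b]` and its levels are closed orbits of the Hamiltonian field of `ω`.
Following these orbits, with time normalised to a common period `P`, and then crossing the levels
gives periodic coordinates `(t, y)` with `ω = y` in which `dx = c dt dy`, where `c` is the
Hamiltonian time per unit of `t`. In them all three conditions become
`∫₀ᴾ c(t, y) ν(t, y) dt = 0` for every `y`:
* `dl / |∇ω| = c dt` on the level `y`;
* the area `∬ 1_{W_ε < λ} c dy dt` has `ε`-derivative `-∫₀ᴾ c(t, λ) ν(t, λ) dt`;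
* `ν = {ω, α}` reads `∂α/∂t = c ν`, solvable by a `P`-periodic `α` exactly when `c ν` has mean zero
  over a period.
-/

/-! ### Invariance of domain in the plane -/

section ContinuousLog

/-- `g : X → ℂ` is the exponential of a continuous function, i.e. it lifts along the covering
`exp : ℂ → ℂ \ {0}`. -/
def HasContinuousLog {X : Type*} [TopologicalSpace X] (g : X → ℂ) : Prop :=
  ∃ l : X → ℂ, Continuous l ∧ ∀ x, g x = Complex.exp (l x)

variable {X : Type*} [TopologicalSpace X] {f g : X → ℂ}

lemma HasContinuousLog.mul (hf : HasContinuousLog f) (hg : HasContinuousLog g) :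
    HasContinuousLog fun x => f x * g x := by
  obtain ⟨l, hl, hfl⟩ := hf
  obtain ⟨m, hm, hgm⟩ := hg
  exact ⟨fun x => l x + m x, hl.add hm, fun x => by simp only [hfl, hgm, Complex.exp_add]⟩

lemma hasContinuousLog_of_norm_sub_one_lt_one (hf : Continuous f) (h : ∀ x, ‖f x - 1‖ < 1) :
    HasContinuousLog f := by
  have hslit : ∀ x, f x ∈ Complex.slitPlane := fun x => by
    simpa using Complex.mem_slitPlane_of_norm_lt_one (h x)
  exact ⟨fun x => Complex.log (f x), hf.clog hslit,
    fun x => (Complex.exp_log (Complex.slitPlane_ne_zero (hslit x))).symm⟩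

lemma HasContinuousLog.of_homotopy {H : unitInterval → X → ℂ}
    (hH : Continuous fun p : unitInterval × X => H p.1 p.2)
    (hne : ∀ t x, H t x ≠ 0) (h : HasContinuousLog (H 0)) : HasContinuousLog (H 1) := by
  obtain ⟨l, hl, hHl⟩ := h
  let G : C(unitInterval × X, {z : ℂ // z ≠ 0}) := ⟨fun p => ⟨H p.1 p.2, hne _ _⟩, hH.subtype_mk _⟩
  have hG : ∀ x, G (0, x) = ⟨_, (l x).exp_ne_zero⟩ := fun x => Subtype.ext (hHl x)
  let L := Complex.isCoveringMap_exp.liftHomotopy G ⟨l, hl⟩ hG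
  have hL : _ ∘ L = G := Complex.isCoveringMap_exp.liftHomotopy_lifts G ⟨l, hl⟩ hG
  exact ⟨fun x => L (1, x), by fun_prop, fun x => (congrArg Subtype.val (congrFun hL (1, x))).symm⟩

-- The imaginary part of `l (-z) - l z` is odd, hence vanishes somewhere, and there
-- `exp (l (-z) - l z) = g (-z) / g z = -1` would be positive.
lemma not_hasContinuousLog_of_odd {g : Circle → ℂ} (hodd : ∀ z, g (-z) = -g z) :
    ¬ HasContinuousLog g := by
  rintro ⟨l, hl, hgl⟩
  let r : Circle → ℝ := fun z => (l (-z) - l z).im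
  have hr : Continuous r := by fun_prop
  have hr_odd : ∀ z, r (-z) = -r z := fun z => by simp [r]
  obtain ⟨z, hz⟩ : ∃ z, r z = 0 := by
    rcases le_total (r 1) 0 with h | h
    · exact mem_range_of_exists_le_of_exists_ge hr ⟨1, h⟩ ⟨-1, by rw [hr_odd]; linarith⟩
    · exact mem_range_of_exists_le_of_exists_ge hr ⟨-1, by rw [hr_odd]; linarith⟩ ⟨1, h⟩
  have hexp : Complex.exp (l (-z) - l z) = -1 := by
    rw [Complex.exp_sub, ← hgl, ← hgl, hodd, neg_div, div_self (hgl z ▸ Complex.exp_ne_zero _)]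
  have hre := congrArg Complex.re hexp
  rw [Complex.exp_re, show (l (-z) - l z).im = 0 from hz, Real.cos_zero, mul_one,
    Complex.neg_re, Complex.one_re] at hre
  linarith [Real.exp_pos (l (-z) - l z).re]

end ContinuousLog

section InvarianceOfDomain

lemma ofReal_mul_circle_mem_closedBall {s : ℝ} (hs : |s| ≤ 1) (z : Circle) :
    (s : ℂ) * z ∈ Metric.closedBall (0 : ℂ) 1 := by
  simpa [Circle.norm_coe] using hs

lemma hasContinuousLog_circle_of_ne_zero {f : ℂ → ℂ} (hf : ContinuousOn f (Metric.closedBall 0 1))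
    (hne : ∀ z ∈ Metric.closedBall 0 1, f z ≠ 0) : HasContinuousLog fun z : Circle => f z := by
  have hmem : ∀ (t : unitInterval) (z : Circle), ((t : ℝ) : ℂ) * z ∈ Metric.closedBall (0 : ℂ) 1 :=
    fun t => ofReal_mul_circle_mem_closedBall (abs_le.2 ⟨by linarith [t.2.1], t.2.2⟩)
  have h := HasContinuousLog.of_homotopy
    (H := fun (t : unitInterval) (z : Circle) => f ((t : ℝ) * z))
    (hf.comp_continuous (by fun_prop) fun p => hmem p.1 p.2) (fun t z => hne _ (hmem t z))
    ⟨fun _ => Complex.log (f 0), continuous_const,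
      fun z => by simp [Complex.exp_log (hne 0 (by simp))]⟩
  simpa using h

-- Deforming `f z - f 0` through `f (z / (1 + t)) - f (-t z / (1 + t))` ends at an odd function.
lemma not_hasContinuousLog_circle_of_injOn {f : ℂ → ℂ}
    (hf : ContinuousOn f (Metric.closedBall 0 1)) (hinj : InjOn f (Metric.closedBall 0 1)) :
    ¬ HasContinuousLog fun z : Circle => f z - f 0 := by
  intro hlog
  have hpos : ∀ t : unitInterval, 0 < 1 + (t : ℝ) := fun t => by linarith [t.2.1]
  have hmem₁ : ∀ (t : unitInterval) (z : Circle),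
      ((1 / (1 + t) : ℝ) : ℂ) * z ∈ Metric.closedBall (0 : ℂ) 1 :=
    fun t => ofReal_mul_circle_mem_closedBall <| by
      rw [abs_of_pos (one_div_pos.2 (hpos t)), div_le_one (hpos t)]
      linarith [t.2.1]
  have hmem₂ : ∀ (t : unitInterval) (z : Circle),
      ((-t / (1 + t) : ℝ) : ℂ) * z ∈ Metric.closedBall (0 : ℂ) 1 :=
    fun t => ofReal_mul_circle_mem_closedBall <| by
      rw [neg_div, abs_neg, abs_of_nonneg (div_nonneg t.2.1 (hpos t).le), div_le_one (hpos t)]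
      linarith
  have hcont₁ : Continuous fun p : unitInterval × Circle =>
      f (((1 / (1 + p.1) : ℝ) : ℂ) * p.2) :=
    hf.comp_continuous (by fun_prop (disch := exact fun p => (hpos p.1).ne')) fun p => hmem₁ p.1 p.2
  have hcont₂ : Continuous fun p : unitInterval × Circle =>
      f (((-p.1 / (1 + p.1) : ℝ) : ℂ) * p.2) :=
    hf.comp_continuous (by fun_prop (disch := exact fun p => (hpos p.1).ne')) fun p => hmem₂ p.1 p.2
  have hlog₁ := HasContinuousLog.of_homotopy (hcont₁.sub hcont₂)
    (fun t z h => by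
      have hcoeff := mul_right_cancel₀ (Circle.coe_ne_zero z)
        (hinj (hmem₁ t z) (hmem₂ t z) (sub_eq_zero.1 h))
      have hone : (1 : ℝ) = -t := (div_left_inj' (hpos t).ne').1 (Complex.ofReal_injective hcoeff)
      linarith [hpos t])
    (by simpa using hlog)
  refine not_hasContinuousLog_of_odd (fun z => ?_) hlog₁
  have hneg : ((-z : Circle) : ℂ) = -z := by simp
  simp only [Icc.coe_one, hneg, neg_div, Complex.ofReal_neg, mul_neg, neg_mul, neg_neg, neg_sub]

lemma image_closedBall_mem_nhds_of_injOn {f : ℂ → ℂ} (hf : ContinuousOn f (Metric.closedBall 0 1))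
    (hinj : InjOn f (Metric.closedBall 0 1)) : f '' Metric.closedBall 0 1 ∈ 𝓝 (f 0) := by
  have hcircle : ∀ z : Circle, (z : ℂ) ∈ Metric.closedBall (0 : ℂ) 1 := fun z => by
    simp [Circle.norm_coe]
  have hfc : Continuous fun z : Circle => f z := hf.comp_continuous (by fun_prop) hcircle
  obtain ⟨z₀, -, hmin⟩ := isCompact_univ.exists_isMinOn (univ_nonempty (α := Circle))
    (hfc.sub continuous_const).norm.continuousOn
  have hm : 0 < ‖f z₀ - f 0‖ := norm_pos_iff.2 <| sub_ne_zero.2 fun h =>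
    Circle.coe_ne_zero z₀ (hinj (hcircle z₀) (by simp) h)
  refine Metric.mem_nhds_iff.2 ⟨‖f z₀ - f 0‖ / 2, half_pos hm, fun w hw => ?_⟩
  by_contra hmiss
  have hwne : ∀ z ∈ Metric.closedBall 0 1, f z - w ≠ 0 := fun z hz h =>
    hmiss ⟨z, hz, sub_eq_zero.1 h⟩
  have hwlog : HasContinuousLog fun z : Circle => f z - w :=
    hasContinuousLog_circle_of_ne_zero (hf.sub continuousOn_const) hwne
  have hratio : HasContinuousLog fun z : Circle => (f z - f 0) / (f z - w) := by
    refine hasContinuousLog_of_norm_sub_one_lt_one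
      ((hfc.sub continuous_const).div (hfc.sub continuous_const) fun z => hwne z (hcircle z))
      fun z => ?_
    have hz : ‖f z₀ - f 0‖ ≤ ‖f z - f 0‖ := hmin (mem_univ z)
    have hsub : (f z - f 0) / (f z - w) - 1 = (w - f 0) / (f z - w) := by
      rw [div_sub_one (hwne z (hcircle z))]; ring
    rw [mem_ball_iff_norm] at hw
    rw [hsub, norm_div, div_lt_one (norm_pos_iff.2 (hwne z (hcircle z)))]
    linarith [norm_sub_le_norm_sub_add_norm_sub (f z) w (f 0)]
  refine not_hasContinuousLog_circle_of_injOn hf hinj ?_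
  convert hwlog.mul hratio using 2 with z
  rw [mul_div_cancel₀ _ (hwne z (hcircle z))]

variable {E F : Type*} [NormedAddCommGroup E] [NormedSpace ℝ E] [NormedAddCommGroup F]
  [NormedSpace ℝ F] {f : E → F}

theorem isOpen_image_of_injOn_of_finrank_eq_two (hE : Module.finrank ℝ E = 2)
    (hF : Module.finrank ℝ F = 2) {U : Set E} (hU : IsOpen U) (hf : ContinuousOn f U)
    (hinj : InjOn f U) : IsOpen (f '' U) := by
  have : FiniteDimensional ℝ E := .of_finrank_pos (by omega)
  have : FiniteDimensional ℝ F := .of_finrank_pos (by omega)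
  let e : ℂ ≃L[ℝ] E := .ofFinrankEq (by rw [hE, Complex.finrank_real_complex])
  let e' : ℂ ≃L[ℝ] F := .ofFinrankEq (by rw [hF, Complex.finrank_real_complex])
  rw [isOpen_iff_mem_nhds]
  rintro _ ⟨p, hp, rfl⟩
  obtain ⟨r, hr, hrU⟩ : ∃ r > 0, Metric.closedBall (e.symm p) r ⊆ e ⁻¹' U :=
    Metric.nhds_basis_closedBall.mem_iff.1
      ((hU.preimage e.continuous).mem_nhds (by simpa using hp))
  let k : ℂ → E := fun z => e (e.symm p + r * z)
  have hk : ∀ z ∈ Metric.closedBall (0 : ℂ) 1, k z ∈ U := fun z hz => hrU <| by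
    rw [mem_closedBall_zero_iff] at hz
    rw [mem_closedBall_iff_norm, add_sub_cancel_left, norm_mul, Complex.norm_real,
      Real.norm_of_nonneg hr.le]
    exact mul_le_of_le_one_right hr.le hz
  have hk_inj : Function.Injective k := fun z w h =>
    mul_left_cancel₀ (Complex.ofReal_ne_zero.2 hr.ne') (add_left_cancel (e.injective h))
  have hnhds := image_closedBall_mem_nhds_of_injOn (f := fun z => e'.symm (f (k z)))
    (e'.symm.continuous.comp_continuousOn (hf.comp (by fun_prop) hk))
    (fun z hz w hw h => hk_inj (hinj (hk z hz) (hk w hw) (e'.symm.injective h)))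
  have himage := e'.toHomeomorph.isOpenMap.image_mem_nhds hnhds
  rw [show e'.toHomeomorph (e'.symm (f (k 0))) = f p by simp [k]] at himage
  refine mem_of_superset himage ?_
  rintro _ ⟨_, ⟨z, hz, rfl⟩, rfl⟩
  exact ⟨k z, hk z hz, (e'.apply_symm_apply _).symm⟩

theorem interior_image_of_isCompact_of_injOn (hE : Module.finrank ℝ E = 2)
    (hF : Module.finrank ℝ F = 2) {K : Set E} (hK : IsCompact K) (hf : ContinuousOn f K)
    (hinj : InjOn f K) : interior (f '' K) = f '' interior K := by
  have hleft : ∀ x ∈ K, Function.invFunOn f K (f x) = x := hinj.leftInvOn_invFunOn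
  have hcont : ContinuousOn (Function.invFunOn f K) (f '' K) := by
    refine continuousOn_iff_isClosed.2 fun t ht => ⟨f '' (K ∩ t),
      ((hK.inter_right ht).image_of_continuousOn (hf.mono inter_subset_left)).isClosed, ?_⟩
    ext y
    constructor
    · rintro ⟨hy, x, hx, rfl⟩
      exact ⟨⟨x, ⟨hx, by simpa only [mem_preimage, hleft x hx] using hy⟩, rfl⟩, x, hx, rfl⟩
    · rintro ⟨⟨x, ⟨hx, hxt⟩, rfl⟩, -⟩
      exact ⟨by rwa [mem_preimage, hleft x hx], x, hx, rfl⟩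
  apply Subset.antisymm
  · intro y hy
    obtain ⟨x, hx, rfl⟩ := interior_subset hy
    have hopen : IsOpen (Function.invFunOn f K '' interior (f '' K)) :=
      isOpen_image_of_injOn_of_finrank_eq_two hF hE isOpen_interior (hcont.mono interior_subset)
        ((Function.invFunOn_injOn_image f K).mono interior_subset)
    have hsub : Function.invFunOn f K '' interior (f '' K) ⊆ K := by
      rintro _ ⟨y, hy, rfl⟩
      exact Function.invFunOn_mem (interior_subset (s := f '' K) hy)
    exact ⟨x, interior_maximal hsub hopen ⟨f x, hy, hleft x hx⟩, rfl⟩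
  · exact interior_maximal (image_mono interior_subset)
      (isOpen_image_of_injOn_of_finrank_eq_two hE hF isOpen_interior (hf.mono interior_subset)
        (hinj.mono interior_subset))

end InvarianceOfDomain

/-! ### Functions without critical points on an annulus -/

section

variable {E : Type*} [NormedAddCommGroup E] [NormedSpace ℝ E]

lemma isPreconnected_norm_preimage (hE : 1 < Module.rank ℝ E) {S : Set ℝ} (hS : IsPreconnected S)
    (hpos : S ⊆ Ioi 0) : IsPreconnected (norm ⁻¹' S : Set E) := by
  have himage := (hS.prod (isPreconnected_sphere hE 0 1)).image (fun p : ℝ × E => p.1 • p.2)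
    (by fun_prop)
  convert himage using 1
  ext x
  constructor
  · intro hx
    have hne : ‖x‖ ≠ 0 := (hpos hx).ne'
    exact ⟨(‖x‖, ‖x‖⁻¹ • x), ⟨hx, by simp [norm_smul, hne]⟩, by simp [smul_smul, hne]⟩
  · rintro ⟨⟨r, y⟩, ⟨hr, hy⟩, rfl⟩
    rw [mem_sphere_zero_iff_norm] at hy
    have hr_pos : 0 < r := hpos hr
    simpa [norm_smul, hy, abs_of_pos hr_pos] using hr

lemma lt_of_mem_interior_of_frontier_le {K : Set E} (hK : IsCompact K) {f : E → ℝ} {b : ℝ}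
    (hf : ContinuousOn f K) (hcrit : ∀ x ∈ interior K, fderiv ℝ f x ≠ 0)
    (hfr : ∀ x ∈ frontier K, f x ≤ b) {x : E} (hx : x ∈ interior K) : f x < b := by
  obtain ⟨z, hz, hmax⟩ := hK.exists_isMaxOn ⟨x, interior_subset hx⟩ hf
  have hno_max : ∀ y ∈ interior K, f y < f z := fun y hy =>
    lt_of_le_of_ne (hmax (interior_subset hy)) fun hyz => hcrit y hy <| by
      refine IsLocalMax.fderiv_eq_zero ?_
      filter_upwards [isOpen_interior.mem_nhds hy] with w hw
      exact (hmax (interior_subset hw)).trans_eq hyz.symm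
  have hz_fr : z ∈ frontier K := ⟨subset_closure hz, fun hzi => (hno_max z hzi).false⟩
  exact (hno_max x hx).trans_le (hfr z hz_fr)

lemma mem_Ioo_of_mem_interior {K : Set E} (hK : IsCompact K) {f : E → ℝ} {a b : ℝ}
    (hf : ContinuousOn f K) (hcrit : ∀ x ∈ interior K, fderiv ℝ f x ≠ 0)
    (hfr : ∀ x ∈ frontier K, f x ∈ Icc a b) {x : E} (hx : x ∈ interior K) : f x ∈ Ioo a b :=
  ⟨neg_lt_neg_iff.1 <| lt_of_mem_interior_of_frontier_le hK hf.neg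
    (fun y hy => by simpa [fderiv_neg] using hcrit y hy) (fun y hy => neg_le_neg (hfr y hy).1) hx,
  lt_of_mem_interior_of_frontier_le hK hf hcrit (fun y hy => (hfr y hy).2) hx⟩

end

/-- `K` is a compact set, the closure of its connected interior, and it is foliated by the levels of
the smooth function `ω` without critical points: the levels in `(a, b)` fill the interior, the
levels `a` and `b` the boundary. This is what the argument uses of a closed annulus `K` on whose
boundary components `ω` is constant. -/
structure IsAnnularFunction (K : Set E2) (ω : E2 → ℝ) (a b : ℝ) : Prop where
  isCompact : IsCompact K
  contDiff : ContDiff ℝ ∞ ω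
  gradient_ne_zero : ∀ x ∈ K, gradient ω x ≠ 0
  lt : a < b
  image_eq : ω '' K = Icc a b
  interior_eq : interior K = {x ∈ K | ω x ∈ Ioo a b}
  isConnected_interior : IsConnected (interior K)
  subset_closure_interior : K ⊆ closure (interior K)

section Annulus

variable {K : Set E2} {ω : E2 → ℝ} {a b : ℝ}

lemma fderiv_ne_zero_of_gradient_ne_zero {x : E2} (h : gradient ω x ≠ 0) : fderiv ℝ ω x ≠ 0 :=
  fun h0 => h (by rw [gradient, h0, map_zero])

lemma isAnnularFunction_of_frontier_eq_union (hK : IsCompact K) (hK_conn : IsPreconnected K)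
    (hK_int : IsConnected (interior K)) (hK_reg : K ⊆ closure (interior K))
    {A B : Set E2} (hAB : frontier K = A ∪ B) (hA : A.Nonempty) (hB : B.Nonempty)
    (hω : ContDiff ℝ ∞ ω) (hcrit : ∀ x ∈ K, gradient ω x ≠ 0) (hωA : ∀ x ∈ A, ω x = a)
    (hωB : ∀ x ∈ B, ω x = b) (hab : a < b) : IsAnnularFunction K ω a b := by
  have hfr : ∀ x ∈ frontier K, ω x ∈ Icc a b := fun x hx => by
    rcases hAB.subset hx with h | h
    · rw [hωA x h]; exact left_mem_Icc.2 hab.le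
    · rw [hωB x h]; exact right_mem_Icc.2 hab.le
  have hint : ∀ x ∈ interior K, ω x ∈ Ioo a b := fun x hx =>
    mem_Ioo_of_mem_interior hK hω.continuous.continuousOn
      (fun y hy => fderiv_ne_zero_of_gradient_ne_zero (hcrit y (interior_subset hy))) hfr hx
  have hmem : ∀ x, x ∈ K ↔ x ∈ interior K ∨ x ∈ A ∨ x ∈ B := fun x => by
    rw [← mem_union x A, ← hAB, ← mem_union, hK.isClosed.frontier_eq,
      union_sdiff_cancel interior_subset]
  have hint_eq : interior K = {x ∈ K | ω x ∈ Ioo a b} := Set.ext fun x => by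
    rw [mem_ofPred_eq, hmem]
    refine ⟨fun h => ⟨.inl h, hint x h⟩, ?_⟩
    rintro ⟨h | h | h, hx⟩
    exacts [h, absurd (hωA x h) hx.1.ne', absurd (hωB x h) hx.2.ne]
  have himage : ω '' K = Icc a b := by
    refine Subset.antisymm ?_ ?_
    · rintro _ ⟨x, hx, rfl⟩
      obtain h | h := (hmem x).1 hx
      · exact Ioo_subset_Icc_self (hint x h)
      · exact hfr x (hAB.superset h)
    · obtain ⟨p, hp⟩ := hA
      obtain ⟨q, hq⟩ := hB
      have hivt := hK_conn.intermediate_value ((hmem p).2 (.inr (.inl hp)))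
        ((hmem q).2 (.inr (.inr hq))) hω.continuous.continuousOn
      rwa [hωA p hp, hωB q hq] at hivt
  exact ⟨hK, hω, hcrit, hab, himage, hint_eq, hK_int, hK_reg⟩

lemma isCompact_stdAnnulus : IsCompact stdAnnulus := by
  refine Metric.isCompact_of_isClosed_isBounded
    ((isClosed_le continuous_const continuous_norm).inter
      (isClosed_le continuous_norm continuous_const))
    (Metric.isBounded_closedBall (x := (0 : E2)) (r := 2) |>.subset fun x hx => ?_)
  simpa using hx.2

lemma interior_stdAnnulus : interior stdAnnulus = norm ⁻¹' Ioo 1 2 := by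
  have hdiff : stdAnnulus = Metric.closedBall 0 2 ∩ (Metric.ball 0 1)ᶜ := by
    ext x
    simp [stdAnnulus, and_comm]
  rw [hdiff, interior_inter, interior_compl, interior_closedBall _ two_ne_zero,
    closure_ball _ one_ne_zero]
  ext x
  simp [and_comm]

lemma stdAnnulus_eq_closure_interior : stdAnnulus = closure (interior stdAnnulus) := by
  refine Subset.antisymm (fun x hx => ?_)
    (closure_minimal interior_subset isCompact_stdAnnulus.isClosed)
  have hne : ‖x‖ ≠ 0 := (zero_lt_one.trans_le hx.1).ne'
  have hx_closure : ‖x‖ ∈ closure (Ioo (1 : ℝ) 2) := by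
    rw [closure_Ioo (by norm_num)]
    exact hx
  have hmaps : MapsTo (fun r : ℝ => (r / ‖x‖) • x) (Ioo 1 2) (interior stdAnnulus) := fun r hr => by
    simpa [interior_stdAnnulus, norm_smul, hne, abs_of_pos (zero_lt_one.trans hr.1)] using hr
  simpa [hne] using map_mem_closure (by fun_prop) hx_closure hmaps

lemma isConnected_image_norm_preimage {F : Type*} [TopologicalSpace F] {Φ : E2 → F}
    (hΦ : ContinuousOn Φ stdAnnulus) {S : Set ℝ} (hS : IsConnected S) (hS12 : S ⊆ Icc 1 2) :
    IsConnected (Φ '' (norm ⁻¹' S)) := by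
  have hrank : 1 < Module.rank ℝ E2 := by
    rw [← Module.finrank_eq_rank, finrank_euclideanSpace_fin]
    norm_num
  have hpos : S ⊆ Ioi 0 := fun s hs => zero_lt_one.trans_le (hS12 hs).1
  obtain ⟨r, hr⟩ := hS.nonempty
  have hr_pos : 0 < r := hpos hr
  exact ⟨⟨_, EuclideanSpace.single 0 r, by simpa [abs_of_pos hr_pos] using hr, rfl⟩,
    (isPreconnected_norm_preimage hrank hS.isPreconnected hpos).image _
      (hΦ.mono fun x hx => hS12 hx)⟩

lemma interior_image_stdAnnulus {Φ : E2 → E2} (hΦ : ContinuousOn Φ stdAnnulus)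
    (hinj : InjOn Φ stdAnnulus) : interior (Φ '' stdAnnulus) = Φ '' (norm ⁻¹' Ioo 1 2) := by
  have hE : Module.finrank ℝ E2 = 2 := finrank_euclideanSpace_fin
  rw [interior_image_of_isCompact_of_injOn hE hE isCompact_stdAnnulus hΦ hinj,
    interior_stdAnnulus]

lemma frontier_image_stdAnnulus {Φ : E2 → E2} (hΦ : ContinuousOn Φ stdAnnulus)
    (hinj : InjOn Φ stdAnnulus) :
    frontier (Φ '' stdAnnulus) = Φ '' (norm ⁻¹' {1}) ∪ Φ '' (norm ⁻¹' {2}) := by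
  have hdiff : stdAnnulus \ norm ⁻¹' Ioo 1 2 = norm ⁻¹' {1} ∪ norm ⁻¹' {2} := by
    rw [show stdAnnulus = norm ⁻¹' Icc 1 2 from rfl, ← preimage_sdiff,
      Icc_sdiff_Ioo_same one_le_two, insert_eq, preimage_union]
  rw [(isCompact_stdAnnulus.image_of_continuousOn hΦ).isClosed.frontier_eq,
    interior_image_stdAnnulus hΦ hinj, ← image_union, ← hdiff,
    hinj.image_sdiff_subset (preimage_mono Ioo_subset_Icc_self)]

theorem exists_isAnnularFunction {Φ : E2 → E2} (hΦ : ContinuousOn Φ stdAnnulus)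
    (hinj : InjOn Φ stdAnnulus) (hK : Φ '' stdAnnulus = K) (hω : ContDiff ℝ ∞ ω)
    (hcrit : ∀ x ∈ K, gradient ω x ≠ 0)
    (hlc : ∀ x ∈ frontier K, ∀ y ∈ connectedComponentIn (frontier K) x, ω y = ω x) :
    ∃ a b, IsAnnularFunction K ω a b := by
  have hK_compact : IsCompact K := hK ▸ isCompact_stdAnnulus.image_of_continuousOn hΦ
  have hK_int : interior K = Φ '' (norm ⁻¹' Ioo 1 2) := hK ▸ interior_image_stdAnnulus hΦ hinj
  have hK_fr := hK ▸ frontier_image_stdAnnulus hΦ hinj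
  have hconn₁ := isConnected_image_norm_preimage hΦ (isConnected_singleton (x := 1)) (by norm_num)
  have hconn₂ := isConnected_image_norm_preimage hΦ (isConnected_singleton (x := 2)) (by norm_num)
  have hK_conn : IsConnected K :=
    hK ▸ isConnected_image_norm_preimage hΦ (isConnected_Icc one_le_two) subset_rfl
  have hint_conn : IsConnected (interior K) :=
    hK_int ▸ isConnected_image_norm_preimage hΦ (isConnected_Ioo one_lt_two) Ioo_subset_Icc_self
  have hK_reg : K ⊆ closure (interior K) := by
    have hcl := stdAnnulus_eq_closure_interior
    have himage := (hcl ▸ hΦ : ContinuousOn Φ (closure (interior stdAnnulus))).image_closure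
    rwa [← hcl, hK, interior_stdAnnulus, ← hK_int] at himage
  have hconst : ∀ C ⊆ frontier K, IsConnected C → ∃ c, ∀ x ∈ C, ω x = c := fun C hC hCc => by
    obtain ⟨p, hp⟩ := hCc.nonempty
    exact ⟨ω p, fun x hx => hlc p (hC hp) x (hCc.2.subset_connectedComponentIn hp hC hx)⟩
  obtain ⟨c₁, hc₁⟩ := hconst _ (hK_fr ▸ subset_union_left) hconn₁
  obtain ⟨c₂, hc₂⟩ := hconst _ (hK_fr ▸ subset_union_right) hconn₂
  rcases lt_trichotomy c₁ c₂ with hlt | rfl | hgt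
  · exact ⟨c₁, c₂, isAnnularFunction_of_frontier_eq_union hK_compact hK_conn.2 hint_conn hK_reg
      hK_fr hconn₁.nonempty hconn₂.nonempty hω hcrit hc₁ hc₂ hlt⟩
  · obtain ⟨x, hx⟩ := hint_conn.nonempty
    have hIoo := mem_Ioo_of_mem_interior (a := c₁) (b := c₁) hK_compact hω.continuous.continuousOn
      (fun y hy => fderiv_ne_zero_of_gradient_ne_zero (hcrit y (interior_subset hy)))
      (fun y hy => by simpa using (hK_fr.subset hy).elim (hc₁ y) (hc₂ y)) hx
    exact absurd hIoo (by simp)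
  · exact ⟨c₂, c₁, isAnnularFunction_of_frontier_eq_union hK_compact hK_conn.2 hint_conn hK_reg
      (hK_fr.trans (union_comm _ _)) hconn₂.nonempty hconn₁.nonempty hω hcrit hc₂ hc₁ hgt⟩

end Annulus

/-! ### Flows of smooth vector fields -/

section Flow

variable {E : Type*} [NormedAddCommGroup E] [NormedSpace ℝ E] {v : E → E}
  {K : NNReal}

lemma dist_le_of_isIntegralCurve_of_nonneg {γ₁ γ₂ : ℝ → E} (hv : LipschitzWith K v)
    (h₁ : IsIntegralCurve γ₁ fun _ => v) (h₂ : IsIntegralCurve γ₂ fun _ => v) {t : ℝ} (ht : 0 ≤ t) :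
    dist (γ₁ t) (γ₂ t) ≤ dist (γ₁ 0) (γ₂ 0) * Real.exp (K * t) := by
  simpa using dist_le_of_trajectories_ODE (fun _ => hv) h₁.continuous.continuousOn
    (fun s _ => (h₁ s).hasDerivWithinAt) h₂.continuous.continuousOn
    (fun s _ => (h₂ s).hasDerivWithinAt) le_rfl t ⟨ht, le_rfl⟩

lemma dist_le_of_isIntegralCurve {γ₁ γ₂ : ℝ → E} (hv : LipschitzWith K v)
    (h₁ : IsIntegralCurve γ₁ fun _ => v) (h₂ : IsIntegralCurve γ₂ fun _ => v) (t : ℝ) :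
    dist (γ₁ t) (γ₂ t) ≤ dist (γ₁ 0) (γ₂ 0) * Real.exp (K * |t|) := by
  rcases le_total 0 t with ht | ht
  · simpa only [abs_of_nonneg ht] using dist_le_of_isIntegralCurve_of_nonneg hv h₁ h₂ ht
  · have hneg : LipschitzWith K fun x => (-1 : ℝ) • v x := by
      simpa only [neg_one_smul, Pi.neg_def] using hv.neg
    simpa [abs_of_nonpos ht] using dist_le_of_isIntegralCurve_of_nonneg hneg
      (h₁.comp_mul (-1)) (h₂.comp_mul (-1)) (neg_nonneg.2 ht)

variable [CompleteSpace E]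

lemma exists_isIntegralCurve_of_bounded {L : NNReal} (hv : LipschitzWith K v) (hv1 : ContDiff ℝ 1 v)
    (hb : ∀ x, ‖v x‖ ≤ L) (x : E) : ∃ γ : ℝ → E, γ 0 = x ∧ IsIntegralCurve γ fun _ => v := by
  have hmfd := exists_isMIntegralCurve_iff_exists_isMIntegralCurveOn_Ioo
    (I := modelWithCornersSelf ℝ E) (v := v) (contMDiff_vectorSpace_iff_contDiff.2 hv1) x
  obtain ⟨γ, h0, h⟩ := hmfd.2 fun a => by
    have hpl : IsPicardLindelof (fun _ => v) (tmin := -|a|) (tmax := |a|)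
        ⟨0, by simp⟩ x (L * ‖a‖₊) 0 L K :=
      .of_time_independent (fun x _ => hb x) hv.lipschitzOnWith (by simp)
    obtain ⟨α, h0, h1⟩ := hpl.exists_eq_forall_mem_Icc_hasDerivWithinAt₀
    have hsub : Ioo (-a) a ⊆ Icc (-|a|) |a| := fun t ht =>
      ⟨(neg_le_neg (le_abs_self a)).trans ht.1.le, ht.2.le.trans (le_abs_self a)⟩
    exact ⟨α, h0, fun t ht => ((h1 t (hsub ht)).mono hsub).hasFDerivWithinAt.hasMFDerivWithinAt⟩
  refine ⟨γ, h0, fun t => ?_⟩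
  have hfd : HasFDerivAt γ ((1 : ℝ →L[ℝ] ℝ).smulRight (v (γ t))) t :=
    hasMFDerivAt_iff_hasFDerivAt.1 (h t)
  simpa using hfd.hasDerivAt

lemma exists_flow_of_hasCompactSupport (hv : ContDiff ℝ 1 v) (hc : HasCompactSupport v) :
    ∃ φ : Flow ℝ E, ∀ x, IsIntegralCurve (φ · x) fun _ => v := by
  obtain ⟨K, hK⟩ := hv.lipschitzWith_of_hasCompactSupport hc one_ne_zero
  obtain ⟨L, hL⟩ := hv.continuous.bounded_above_of_compact_support hc
  choose γ hγ0 hγ using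
    exists_isIntegralCurve_of_bounded (L := L.toNNReal) hK hv fun x => (hL x).trans (by simp)
  have hdist : ∀ t x y, dist (γ x t) (γ y t) ≤ dist x y * Real.exp (K * |t|) := fun t x y => by
    simpa only [hγ0] using dist_le_of_isIntegralCurve hK (hγ x) (hγ y) t
  refine ⟨⟨fun t x => γ x t, continuous_iff_continuousAt.2 ?_, fun s t x => ?_, hγ0⟩, hγ⟩
  · rintro ⟨t, x⟩
    have hlim : Tendsto (fun p : ℝ × E => dist p.2 x * Real.exp (K * |p.1|)
        + dist (γ x p.1) (γ x t)) (𝓝 (t, x)) (𝓝 0) := by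
      have hγx := (hγ x).continuous
      have : Continuous fun p : ℝ × E => dist p.2 x * Real.exp (K * |p.1|)
        + dist (γ x p.1) (γ x t) := by fun_prop
      simpa using this.tendsto (t, x)
    exact tendsto_iff_dist_tendsto_zero.2 <| squeeze_zero (fun _ => dist_nonneg)
      (fun p => (dist_triangle _ (γ x p.1) _).trans (add_le_add_left (hdist _ _ _) _)) hlim
  · have hshift := dist_le_of_isIntegralCurve hK ((hγ x).comp_add t) (hγ (γ x t)) s
    simpa [hγ0] using hshift

end Flow

/-! ### Superposition operators and smooth dependence on initial conditions -/

section Superposition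

universe u

variable {X : Type*} [TopologicalSpace X] [CompactSpace X] {E F : Type u}
  [NormedAddCommGroup E] [NormedSpace ℝ E] [NormedAddCommGroup F] [NormedSpace ℝ F]

variable (X E F) in
/-- Pointwise application of a continuous family of operators to a continuous family of vectors,
as a bounded bilinear map. It is the derivative of a superposition operator `u ↦ v ∘ u`. -/
def pointwiseApplyL : C(X, E →L[ℝ] F) →L[ℝ] C(X, E) →L[ℝ] C(X, F) :=
  LinearMap.mkContinuous₂
    (LinearMap.mk₂ ℝ (fun (A : C(X, E →L[ℝ] F)) (h : C(X, E)) =>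
        (⟨fun s => A s (h s), by fun_prop⟩ : C(X, F)))
      (fun _ _ _ => by ext; simp) (fun _ _ _ => by ext; simp)
      (fun _ _ _ => by ext; simp) (fun _ _ _ => by ext; simp)) 1 fun A h => by
    refine (ContinuousMap.norm_le _ (by positivity)).2 fun s => ?_
    rw [one_mul]
    exact ((A s).le_opNorm _).trans (mul_le_mul (A.norm_coe_le_norm s) (h.norm_coe_le_norm s)
      (norm_nonneg _) (by positivity))

lemma eventually_forall_norm_sub_sub_le {v : E → F} {v' : E → E →L[ℝ] F}
    (hv : ∀ x, HasStrictFDerivAt v (v' x) x) (hv' : Continuous v') (u : C(X, E)) {ε : ℝ}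
    (hε : 0 < ε) :
    ∀ᶠ k in 𝓝 (0 : E), ∀ s, ‖v (u s + k) - v (u s) - v' (u s) k‖ ≤ ε * ‖k‖ := by
  suffices h : ∀ᶠ k in 𝓝 (0 : E), ∀ s ∈ (univ : Set X),
      ‖v (u s + k) - v (u s) - v' (u s) k‖ ≤ ε * ‖k‖ from h.mono fun k hk s => hk s trivial
  refine isCompact_univ.eventually_forall_of_forall_eventually fun s₀ _ => ?_
  have hstrict := Asymptotics.isLittleO_iff.1 (hv (u s₀)).isLittleO (half_pos hε)
  have htend : Tendsto (fun z : E × X => (u z.2 + z.1, u z.2)) (𝓝 (0, s₀))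
      (𝓝 (u s₀, u s₀)) := by
    have : Continuous fun z : E × X => (u z.2 + z.1, u z.2) := by fun_prop
    simpa using this.tendsto (0, s₀)
  have hclose : ∀ᶠ z : E × X in 𝓝 (0, s₀), ‖v' (u s₀) - v' (u z.2)‖ < ε / 2 := by
    have : Continuous fun z : E × X => ‖v' (u s₀) - v' (u z.2)‖ := by fun_prop
    exact this.continuousAt.eventually_lt continuousAt_const (by simpa using half_pos hε)
  filter_upwards [htend.eventually hstrict, hclose] with ⟨k, s⟩ hk hs
  rw [add_sub_cancel_left] at hk
  calc ‖v (u s + k) - v (u s) - v' (u s) k‖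
      = ‖(v (u s + k) - v (u s) - v' (u s₀) k) + (v' (u s₀) - v' (u s)) k‖ := by simp
    _ ≤ ε / 2 * ‖k‖ + ε / 2 * ‖k‖ := (norm_add_le _ _).trans
        (add_le_add hk ((ContinuousLinearMap.le_opNorm _ _).trans (by gcongr)))
    _ = ε * ‖k‖ := by ring

lemma hasFDerivAt_comp_continuousMap (v : C(E, F)) (v' : C(E, E →L[ℝ] F))
    (hv : ∀ x, HasStrictFDerivAt v (v' x) x) (u : C(X, E)) :
    HasFDerivAt (fun w : C(X, E) => v.comp w) (pointwiseApplyL X E F (v'.comp u)) u := by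
  rw [hasFDerivAt_iff_isLittleO_nhds_zero, Asymptotics.isLittleO_iff]
  intro ε hε
  obtain ⟨δ, hδ, hk⟩ := Metric.eventually_nhds_iff.1
    (eventually_forall_norm_sub_sub_le hv v'.continuous u hε)
  filter_upwards [Metric.ball_mem_nhds (0 : C(X, E)) hδ] with h hh
  rw [mem_ball_zero_iff] at hh
  refine (ContinuousMap.norm_le _ (by positivity)).2 fun s => ?_
  have hs := h.norm_coe_le_norm s
  exact (hk (y := h s) (by simpa using hs.trans_lt hh) s).trans (mul_le_mul_of_nonneg_left hs hε.le)

lemma contDiff_nat_comp_continuousMap (n : ℕ) :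
    ∀ {F : Type u} [NormedAddCommGroup F] [NormedSpace ℝ F] (v : C(E, F)), ContDiff ℝ ∞ v →
      ContDiff ℝ n fun u : C(X, E) => v.comp u := by
  induction n with
  | zero => exact fun v _ => contDiff_zero.2 (ContinuousMap.continuous_postcomp v)
  | succ n ih =>
    intro F _ _ v hv
    let v' : C(E, E →L[ℝ] F) := ⟨fderiv ℝ v, hv.continuous_fderiv (by simp)⟩
    rw [Nat.cast_succ, contDiff_succ_iff_hasFDerivAt]
    exact ⟨_, (pointwiseApplyL X E F).contDiff.comp (ih v' (hv.fderiv_right (by simp))),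
      hasFDerivAt_comp_continuousMap v v' fun x => hv.contDiffAt.hasStrictFDerivAt (by simp)⟩

lemma contDiff_comp_continuousMap (v : C(E, F)) (hv : ContDiff ℝ ∞ v) :
    ContDiff ℝ ∞ fun u : C(X, E) => v.comp u :=
  contDiff_infty.2 fun n => contDiff_nat_comp_continuousMap n v hv

variable (F) in
/-- The operator `u ↦ (s ↦ ∫ r in 0..s, u r)` on continuous functions on the unit interval. -/
def primitiveL : C(unitInterval, F) →L[ℝ] C(unitInterval, F) :=
  have hint (u : C(unitInterval, F)) (a b : ℝ) :
      IntervalIntegrable (IccExtend zero_le_one u) volume a b :=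
    u.continuous.Icc_extend'.intervalIntegrable a b
  LinearMap.mkContinuous
    { toFun := fun u => ⟨fun s => ∫ r in (0 : ℝ)..s, IccExtend zero_le_one u r,
        (intervalIntegral.continuous_primitive (hint u) 0).comp continuous_subtype_val⟩
      map_add' := fun u w => by
        ext s
        exact intervalIntegral.integral_add (hint u _ _) (hint w _ _)
      map_smul' := fun c u => by
        ext s
        exact intervalIntegral.integral_smul c _ } 1 fun u => by
    refine (ContinuousMap.norm_le _ (by positivity)).2 fun s => ?_
    have hle := intervalIntegral.norm_integral_le_of_norm_le_const (a := 0) (b := (s : ℝ))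
      (f := IccExtend zero_le_one u) fun r _ => u.norm_coe_le_norm (projIcc 0 1 zero_le_one r)
    rw [sub_zero, abs_of_nonneg s.2.1] at hle
    exact hle.trans (by simpa using mul_le_of_le_one_right (norm_nonneg u) s.2.2)

lemma primitiveL_apply (u : C(unitInterval, F)) {f : ℝ → F} (hf : ∀ r : unitInterval, u r = f r)
    (s : unitInterval) : primitiveL F u s = ∫ r in (0 : ℝ)..s, f r := by
  refine intervalIntegral.integral_congr fun r hr => ?_
  rw [uIcc_of_le s.2.1] at hr
  simpa [IccExtend_of_mem zero_le_one u ⟨hr.1, hr.2.trans s.2.2⟩] using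
    hf ⟨r, hr.1, hr.2.trans s.2.2⟩

lemma contDiff_intervalIntegral {f : ℝ × E → F} (hf : ContDiff ℝ ∞ f) :
    ContDiff ℝ ∞ fun p => ∫ r in (0 : ℝ)..1, f (r, p) := by
  let c : C(unitInterval, ℝ × E) := ⟨fun s => (s, 0), by fun_prop⟩
  let incl : E →L[ℝ] C(unitInterval, ℝ × E) :=
    (ContinuousLinearMap.const ℝ unitInterval).comp (.inr ℝ ℝ E)
  have hcomp := contDiff_comp_continuousMap (X := unitInterval) ⟨f, hf.continuous⟩ hf
  have hsmooth := (ContinuousMap.evalCLM ℝ (1 : unitInterval)).contDiff.comp <|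
    (primitiveL F).contDiff.comp <| hcomp.comp <|
    (contDiff_const (c := c)).add (incl.contDiff (n := ∞))
  convert hsmooth using 1
  funext p
  exact (primitiveL_apply _ (fun r => by simp [c, incl]) 1).symm

end Superposition

section SmoothFlow

variable {E : Type*} [NormedAddCommGroup E] [NormedSpace ℝ E] {v : E → E} {φ : Flow ℝ E}

/-- The integral equation `u = x + τ ∫₀ˢ v(u)`, written as the zero set of a map; its solutions are
the integral curves of `v` on the time interval `[0, τ]`, rescaled to the unit interval. -/
def integralEquation (v : C(E, E)) (p : (ℝ × E) × C(unitInterval, E)) : C(unitInterval, E) :=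
  p.2 - ContinuousLinearMap.const ℝ unitInterval p.1.2 - p.1.1 • primitiveL E (v.comp p.2)

lemma contDiff_integralEquation (v : C(E, E)) (hv : ContDiff ℝ ∞ v) :
    ContDiff ℝ ∞ (integralEquation v) := by
  have hcomp : ContDiff ℝ ∞ fun u : C(unitInterval, E) => primitiveL E (v.comp u) :=
    (primitiveL E).contDiff.comp (contDiff_comp_continuousMap v hv)
  have hconst : ContDiff ℝ ∞ fun x : E => ContinuousLinearMap.const ℝ unitInterval x :=
    ContinuousLinearMap.contDiff _
  exact (contDiff_snd.sub (hconst.comp (contDiff_snd.comp contDiff_fst))).sub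
    ((contDiff_fst.comp contDiff_fst).smul (hcomp.comp contDiff_snd))

lemma fderiv_integralEquation_comp_inr (v : C(E, E)) (hv : ContDiff ℝ ∞ v) (x : E)
    (u : C(unitInterval, E)) :
    fderiv ℝ (integralEquation v) ((0, x), u) ∘L .inr ℝ (ℝ × E) C(unitInterval, E) =
      .id ℝ C(unitInterval, E) := by
  have hsmooth := (contDiff_integralEquation v hv).differentiable (by simp)
  have hchain := (hsmooth ((0, x), u)).hasFDerivAt.comp u (hasFDerivAt_prodMk_right (0, x) u)
  have hid : integralEquation v ∘ (fun w => ((0, x), w)) =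
      fun w => w - ContinuousLinearMap.const ℝ unitInterval x := by
    funext w
    simp [integralEquation]
  rw [hid] at hchain
  exact hchain.unique ((hasFDerivAt_id _).sub_const _)

/-- The trajectories of a flow, rescaled to the unit interval. -/
def trajectory (φ : Flow ℝ E) : C(ℝ × E, C(unitInterval, E)) :=
  ContinuousMap.curry ⟨fun p => φ (p.1.1 * p.2) p.1.2, φ.continuous (by fun_prop) (by fun_prop)⟩

variable [CompleteSpace E]

lemma integralEquation_trajectory (v : C(E, E)) (hφ : ∀ x, IsIntegralCurve (φ · x) fun _ => v)
    (p : ℝ × E) : integralEquation v (p, trajectory φ p) = 0 := by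
  obtain ⟨τ, x⟩ := p
  have hcont : Continuous fun r : ℝ => v (φ (τ * r) x) :=
    v.continuous.comp (φ.continuous (by fun_prop) (by fun_prop))
  ext s
  have hint : ∫ r in (0 : ℝ)..s, τ • v (φ (τ * r) x) = φ (τ * s) x - x := by
    simpa using intervalIntegral.integral_eq_sub_of_hasDerivAt
      (fun r _ => (hφ x (τ * r)).scomp r (by simpa using (hasDerivAt_id r).const_mul τ))
      ((hcont.const_smul τ).intervalIntegrable 0 (s : ℝ))
  rw [intervalIntegral.integral_smul] at hint
  change φ (τ * s) x - x - τ • primitiveL E (v.comp (trajectory φ (τ, x))) s = 0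
  rw [primitiveL_apply _ (f := fun r => v (φ (τ * r) x)) fun r => rfl, hint, sub_self]

-- Near `t = 0` the trajectories solve an equation whose derivative in the unknown curve is the
-- identity, so the implicit function theorem in `C([0, 1], E)` applies.
lemma contDiffAt_flow_zero (hv : ContDiff ℝ ∞ v) (hφ : ∀ x, IsIntegralCurve (φ · x) fun _ => v)
    (x : E) : ContDiffAt ℝ ∞ (fun p : ℝ × E => φ p.1 p.2) (0, x) := by
  let vc : C(E, E) := ⟨v, hv.continuous⟩
  have hsmooth : ContDiffAt ℝ ∞ (integralEquation vc) ((0, x), trajectory φ (0, x)) :=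
    (contDiff_integralEquation vc hv).contDiffAt
  have hinv : (fderiv ℝ (integralEquation vc) ((0, x), trajectory φ (0, x)) ∘L
      .inr ℝ (ℝ × E) C(unitInterval, E)).IsInvertible := by
    rw [fderiv_integralEquation_comp_inr vc hv]
    exact ⟨ContinuousLinearEquiv.refl ℝ _, rfl⟩
  have htend : Tendsto (fun p => (p, trajectory φ p)) (𝓝 (0, x))
      (𝓝 ((0, x), trajectory φ (0, x))) :=
    (continuous_id.prodMk (trajectory φ).continuous).tendsto _
  have hsol : (fun p : ℝ × E => φ p.1 p.2) =ᶠ[𝓝 (0, x)]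
      fun p => hsmooth.implicitFunction (by simp) hinv p 1 := by
    filter_upwards [htend.eventually
      (hsmooth.eventually_apply_eq_iff_implicitFunction (by simp) hinv)] with p hp
    rw [hp.1 (by rw [integralEquation_trajectory vc hφ, integralEquation_trajectory vc hφ])]
    simp [trajectory]
  let eval₁ : C(unitInterval, E) →L[ℝ] E := ContinuousMap.evalCLM ℝ 1
  exact (eval₁.contDiff.contDiffAt.comp (0, x)
    (hsmooth.contDiffAt_implicitFunction (by simp) hinv)).congr_of_eventuallyEq hsol

lemma contDiff_flow (hv : ContDiff ℝ ∞ v) (hφ : ∀ x, IsIntegralCurve (φ · x) fun _ => v) :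
    ContDiff ℝ ∞ fun p : ℝ × E => φ p.1 p.2 := by
  refine contDiff_infty.2 fun n => contDiff_iff_contDiffAt.2 fun ⟨t, x⟩ => ?_
  have hzero : ∀ y, ContDiffAt ℝ n (fun p : ℝ × E => φ p.1 p.2) (0, y) := fun y =>
    (contDiffAt_flow_zero hv hφ y).of_le (by exact_mod_cast le_top)
  have hshift : ∀ r s, ContDiffAt ℝ n (fun p : ℝ × E => φ p.1 p.2) (s - r, φ r x) →
      ContDiffAt ℝ n (fun p : ℝ × E => φ p.1 p.2) (r, x) →
      ContDiffAt ℝ n (fun p : ℝ × E => φ p.1 p.2) (s, x) := fun r s h hr => by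
    have hcomp : (fun p : ℝ × E => φ p.1 p.2) =
        (fun p : ℝ × E => φ p.1 p.2) ∘ fun p => (p.1 - r, φ r p.2) := by
      funext p
      simp [← φ.map_add]
    rw [hcomp]
    exact ContDiffAt.comp (s, x) h ((contDiffAt_fst.sub contDiffAt_const).prodMk
      (hr.comp (f := fun p : ℝ × E => (r, p.2)) (s, x) (contDiffAt_const.prodMk contDiffAt_snd)))
  have hconst : IsLocallyConstant fun s =>
      ContDiffAt ℝ n (fun p : ℝ × E => φ p.1 p.2) (s, x) := by
    refine (IsLocallyConstant.iff_eventually_eq _).2 fun s => ?_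
    have hnear : ∀ᶠ q : ℝ × E in 𝓝 (0, φ s x), ContDiffAt ℝ n (fun p : ℝ × E => φ p.1 p.2) q :=
      (hzero (φ s x)).eventually (by simp)
    have hφc : Continuous fun r => φ r x := φ.continuous continuous_id continuous_const
    have hfwd : Tendsto (fun r => (r - s, φ s x)) (𝓝 s) (𝓝 (0, φ s x)) := by
      have : Continuous fun r : ℝ => (r - s, φ s x) := by fun_prop
      simpa using this.tendsto s
    have hbwd : Tendsto (fun r => (s - r, φ r x)) (𝓝 s) (𝓝 (0, φ s x)) := by
      have : Continuous fun r : ℝ => (s - r, φ r x) := .prodMk (by fun_prop) hφc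
      simpa using this.tendsto s
    filter_upwards [hfwd.eventually hnear, hbwd.eventually hnear] with r h₁ h₂
    exact propext ⟨hshift r s h₂, hshift s r h₁⟩
  exact (hconst.apply_eq_of_preconnectedSpace t 0).mpr (hzero x)

end SmoothFlow

section Cutoff

variable {E F : Type*} [NormedAddCommGroup E] [NormedSpace ℝ E] [NormedAddCommGroup F]
  [NormedSpace ℝ F]

lemma contDiff_smul_of_tsupport_subset {n : WithTop ℕ∞} {U : Set E} {β : E → ℝ} {f : E → F}
    (hβ : ContDiff ℝ n β) (hβU : tsupport β ⊆ U) (hf : ∀ x ∈ U, ContDiffAt ℝ n f x) :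
    ContDiff ℝ n fun x => β x • f x :=
  contMDiff_iff_contDiff.1 <| contMDiff_of_tsupport fun x hx =>
    (hβ.contDiffAt.smul (hf x (hβU (tsupport_smul_subset_left β f hx)))).contMDiffAt

variable [FiniteDimensional ℝ E]

lemma exists_contDiff_cutoff {K U : Set E} (hK : IsCompact K) (hU : IsOpen U) (hKU : K ⊆ U) :
    ∃ β : E → ℝ, ContDiff ℝ ∞ β ∧ HasCompactSupport β ∧ tsupport β ⊆ U ∧ ∀ᶠ x in 𝓝ˢ K, β x = 1 := by
  obtain ⟨L, hL, hKL, hLU⟩ := exists_compact_between hK hU hKU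
  obtain ⟨f, hf₁, hf₀, -⟩ := exists_contMDiffMap_one_nhds_of_subset_interior
    (I := modelWithCornersSelf ℝ E) (n := ⊤) hK.isClosed hKL
  have hsupp : tsupport (f : E → ℝ) ⊆ L :=
    closure_minimal (fun x hx => not_not.1 fun hxL => hx (hf₀ x hxL)) hL.isClosed
  exact ⟨f, f.contMDiff.contDiff,
    .of_support_subset_isCompact hL ((subset_tsupport _).trans hsupp), hsupp.trans hLU, hf₁⟩

end Cutoff

/-! ### Periodic orbits of flows -/

section Flow

variable {X : Type*} [TopologicalSpace X] {φ : Flow ℝ X} {L : Set X} {x y : X}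

lemma flow_add_neg_eq_iff {s t : ℝ} : φ (-s + t) x = y ↔ φ t x = φ s y := by
  rw [φ.map_add]
  exact (φ.toHomeomorph s).symm_apply_eq

lemma exists_flow_eq_of_isPreconnected (hL : IsPreconnected L)
    (hloc : ∀ p ∈ L, ∀ᶠ q in 𝓝[L] p, ∃ t, φ t p = q) (hx : x ∈ L) (hy : y ∈ L) :
    ∃ t, φ t x = y := by
  refine hL.induction₂' (fun p q => ∃ t, φ t p = q) (fun p hp => ?_) ?_ hx hy
  · filter_upwards [hloc p hp] with q ⟨t, ht⟩
    exact ⟨⟨t, ht⟩, -t, by simp [← ht, ← φ.map_add]⟩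
  · rintro p _ _ - - - ⟨s, rfl⟩ ⟨t, rfl⟩
    exact ⟨t + s, φ.map_add t s p⟩

lemma exists_ne_zero_flow_eq_self (hL : IsCompact L) (hinv : ∀ t, φ t x ∈ L)
    (htrans : ∀ p ∈ L, ∃ t, φ t x = p)
    (hloc : ∀ p ∈ L, ∀ᶠ q in 𝓝[L] p, ∃ t < 1, φ t p = q) : ∃ t ≠ 0, φ t x = x := by
  obtain ⟨p, hp, hcluster⟩ := hL.exists_mapClusterPt (f := atTop) (u := fun t : ℝ => φ t x)
    (tendsto_principal.2 (Eventually.of_forall hinv))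
  obtain ⟨s, rfl⟩ := htrans p hp
  have hret := (hcluster.frequently (eventually_nhdsWithin_iff.1 (hloc _ hp))).and_eventually
    (eventually_gt_atTop (1 + s))
  obtain ⟨r, hr, hr_gt⟩ := hret.exists
  obtain ⟨t, ht, htr⟩ := hr (hinv r)
  refine ⟨-r + (t + s), by linarith, ?_⟩
  rw [flow_add_neg_eq_iff, φ.map_add, htr]

lemma exists_periodic_injOn_of_flow_eq_self (hiso : ∀ᶠ t in 𝓝[>] (0 : ℝ), φ t x ≠ x)
    (hret : ∃ t ≠ 0, φ t x = x) :
    ∃ P > 0, Function.Periodic (φ · x) P ∧ InjOn (φ · x) (Ico 0 P) := by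
  let H : AddSubgroup ℝ :=
    { carrier := {t | φ t x = x}
      zero_mem' := φ.map_zero_apply x
      add_mem' := fun {s t} (hs : φ s x = x) (ht : φ t x = x) => by
        rw [mem_ofPred_eq, φ.map_add, ht, hs]
      neg_mem' := fun {s} (hs : φ s x = x) => by
        have := (flow_add_neg_eq_iff (t := 0)).2 ((φ.map_zero_apply x).trans hs.symm)
        rwa [add_zero] at this }
  have hH : ∀ s t, φ t x = φ s x ↔ -s + t ∈ H := fun s t => flow_add_neg_eq_iff.symm
  obtain ⟨ε, hε, hsub⟩ := mem_nhdsGT_iff_exists_Ioo_subset.1 hiso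
  have hdisj : Disjoint (H : Set ℝ) (Ioo 0 ε) := disjoint_left.2 fun t htH ht => hsub ht htH
  obtain ⟨c, hc⟩ := AddSubgroup.cyclic_of_isolated_zero hε hdisj
  have hmem : ∀ t, t ∈ H ↔ ∃ n : ℤ, n • |c| = t := fun t => by
    rw [← AddSubgroup.mem_closure_singleton, hc]
    rcases abs_choice c with h | h <;> simp [h, ← AddSubgroup.zmultiples_eq_closure]
  have hP : 0 < |c| := by
    obtain ⟨T, hT, hTH⟩ := hret
    obtain ⟨n, rfl⟩ := (hmem T).1 hTH
    exact (abs_nonneg c).lt_of_ne fun h => hT (by simp [← h])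
  refine ⟨|c|, hP, fun t => (hH _ _).2 ((hmem _).2 ⟨1, by simp⟩), fun s hs t ht hst => ?_⟩
  obtain ⟨n, hn⟩ := (hmem _).1 ((hH _ _).1 hst)
  rw [zsmul_eq_mul] at hn
  have hn_abs : |(n : ℝ)| * |c| < 1 * |c| := by
    rw [← abs_abs c, ← abs_mul, hn, abs_abs, one_mul, abs_lt]
    constructor <;> linarith [hs.1, hs.2, ht.1, ht.2]
  have hn_zero : n = 0 :=
    Int.abs_lt_one_iff.1 (by exact_mod_cast lt_of_mul_lt_mul_right hn_abs hP.le)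
  simp only [hn_zero, Int.cast_zero, zero_mul] at hn
  linarith

theorem exists_periodic_injOn_image_eq (hL : IsCompact L) (hL_conn : IsPreconnected L)
    (hx : x ∈ L) (hinv : ∀ t, φ t x ∈ L) (hloc : ∀ p ∈ L, ∀ᶠ q in 𝓝[L] p, ∃ t < 1, φ t p = q)
    (hiso : ∀ᶠ t in 𝓝[>] (0 : ℝ), φ t x ≠ x) :
    ∃ P > 0, Function.Periodic (φ · x) P ∧ InjOn (φ · x) (Ico 0 P) ∧ (φ · x) '' Ico 0 P = L := by
  have htrans : ∀ p ∈ L, ∃ t, φ t x = p := fun p hp =>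
    exists_flow_eq_of_isPreconnected hL_conn
      (fun p hp => (hloc p hp).mono fun q ⟨t, _, ht⟩ => ⟨t, ht⟩) hx hp
  obtain ⟨P, hP, hper, hinj⟩ :=
    exists_periodic_injOn_of_flow_eq_self hiso (exists_ne_zero_flow_eq_self hL hinv htrans hloc)
  refine ⟨P, hP, hper, hinj, Subset.antisymm (image_subset_iff.2 fun t _ => hinv t) fun p hp => ?_⟩
  obtain ⟨t, rfl⟩ := htrans p hp
  obtain ⟨s, hs, hts⟩ := hper.exists_mem_Ico₀ hP t
  exact ⟨s, hs, hts.symm⟩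

end Flow

section Cutoff

variable {E : Type*} [NormedAddCommGroup E] [NormedSpace ℝ E] [FiniteDimensional ℝ E]

lemma exists_flow_of_contDiffOn {K U : Set E} {v : E → E} (hK : IsCompact K) (hU : IsOpen U)
    (hKU : K ⊆ U) (hv : ContDiffOn ℝ ∞ v U) :
    ∃ (φ : Flow ℝ E) (β : E → ℝ), ContDiff ℝ ∞ (fun p : ℝ × E => φ p.1 p.2) ∧
      (∀ᶠ x in 𝓝ˢ K, β x = 1) ∧
      ∀ x, IsIntegralCurve (φ · x) fun _ y => β y • v y := by
  obtain ⟨β, hβ, hβc, hβU, hβ1⟩ := exists_contDiff_cutoff hK hU hKU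
  have hβv : ContDiff ℝ ∞ fun y => β y • v y :=
    contDiff_smul_of_tsupport_subset hβ hβU fun x hx => hv.contDiffAt (hU.mem_nhds hx)
  obtain ⟨φ, hφ⟩ := exists_flow_of_hasCompactSupport (hβv.of_le (by simp)) hβc.smul_right
  exact ⟨φ, β, contDiff_flow hβv hφ, hβ1, hφ⟩

end Cutoff

/-! ### Gradient and Hamiltonian vector fields in the plane -/

/-- The Hamiltonian vector field of `ω`, the gradient rotated by a quarter turn: the derivative of
`α` along it is the Poisson bracket `{ω, α}`. -/
def hamiltonianField (ω : E2 → ℝ) (x : E2) : E2 := !₂[-pd 1 ω x, pd 0 ω x]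

section Fields

variable {ω : E2 → ℝ} {x : E2}

lemma fderiv_apply_eq_pd (f : E2 → ℝ) (x v : E2) :
    fderiv ℝ f x v = v 0 * pd 0 f x + v 1 * pd 1 f x := by
  have hv : v = v 0 • EuclideanSpace.single 0 (1 : ℝ) + v 1 • EuclideanSpace.single 1 (1 : ℝ) := by
    ext i
    fin_cases i <;> simp
  conv_lhs => rw [hv, map_add, map_smul, map_smul]
  rfl

lemma gradient_eq_pd (ω : E2 → ℝ) (x : E2) : gradient ω x = !₂[pd 0 ω x, pd 1 ω x] := by
  refine ext_inner_right ℝ fun v => ?_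
  rw [gradient, InnerProductSpace.toDual_symm_apply, fderiv_apply_eq_pd]
  simp [PiLp.inner_apply, Fin.sum_univ_two]

lemma sq_norm_gradient (ω : E2 → ℝ) (x : E2) :
    ‖gradient ω x‖ ^ 2 = pd 0 ω x ^ 2 + pd 1 ω x ^ 2 := by
  simp [gradient_eq_pd, EuclideanSpace.norm_sq_eq]

lemma fderiv_hamiltonianField (ω α : E2 → ℝ) (x : E2) :
    fderiv ℝ α x (hamiltonianField ω x) = pb ω α x := by
  simp only [fderiv_apply_eq_pd, hamiltonianField, pb, Matrix.cons_val_zero, Matrix.cons_val_one]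
  ring

lemma fderiv_hamiltonianField_self (ω : E2 → ℝ) (x : E2) :
    fderiv ℝ ω x (hamiltonianField ω x) = 0 := by
  rw [fderiv_hamiltonianField, pb]
  ring

lemma fderiv_inv_sq_norm_smul_gradient (h : gradient ω x ≠ 0) :
    fderiv ℝ ω x ((‖gradient ω x‖ ^ 2)⁻¹ • gradient ω x) = 1 := by
  rw [map_smul, ← InnerProductSpace.toDual_symm_apply, ← gradient, real_inner_self_eq_norm_sq,
    smul_eq_mul, inv_mul_cancel₀ (by simpa using h)]

lemma norm_hamiltonianField (ω : E2 → ℝ) (x : E2) : ‖hamiltonianField ω x‖ = ‖gradient ω x‖ := by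
  refine (pow_left_inj₀ (norm_nonneg _) (norm_nonneg _) two_ne_zero).1 ?_
  rw [sq_norm_gradient, EuclideanSpace.norm_sq_eq]
  simp [hamiltonianField, add_comm]

lemma hamiltonianField_ne_zero (h : gradient ω x ≠ 0) : hamiltonianField ω x ≠ 0 := by
  rwa [← norm_ne_zero_iff, norm_hamiltonianField, norm_ne_zero_iff]

lemma eq_smul_hamiltonianField_add_smul_gradient (h : gradient ω x ≠ 0) (v : E2) :
    v = (inner ℝ (hamiltonianField ω x) v / ‖gradient ω x‖ ^ 2) • hamiltonianField ω x +
      fderiv ℝ ω x v • ((‖gradient ω x‖ ^ 2)⁻¹ • gradient ω x) := by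
  have hq : pd 0 ω x ^ 2 + pd 1 ω x ^ 2 ≠ 0 := by
    rw [← sq_norm_gradient]
    simpa using h
  rw [fderiv_apply_eq_pd, sq_norm_gradient, gradient_eq_pd]
  ext i
  fin_cases i <;> simp [hamiltonianField, PiLp.inner_apply] <;> field_simp <;> ring

lemma contDiff_pd (hω : ContDiff ℝ ∞ ω) (i : Fin 2) : ContDiff ℝ ∞ (pd i ω) :=
  (hω.fderiv_right (by simp)).clm_apply contDiff_const

lemma contDiff_pb {α : E2 → ℝ} (hω : ContDiff ℝ ∞ ω) (hα : ContDiff ℝ ∞ α) :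
    ContDiff ℝ ∞ (pb ω α) :=
  ((contDiff_pd hω 0).mul (contDiff_pd hα 1)).sub ((contDiff_pd hω 1).mul (contDiff_pd hα 0))

lemma contDiff_gradient (hω : ContDiff ℝ ∞ ω) : ContDiff ℝ ∞ (gradient ω) :=
  (InnerProductSpace.toDual ℝ E2).symm.contDiff.comp (hω.fderiv_right (by simp))

lemma contDiff_hamiltonianField (hω : ContDiff ℝ ∞ ω) : ContDiff ℝ ∞ (hamiltonianField ω) := by
  refine contDiff_euclidean.2 fun i => ?_
  fin_cases i
  · simpa [hamiltonianField] using (contDiff_pd hω 1).neg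
  · simpa [hamiltonianField] using contDiff_pd hω 0

end Fields

section PartialDerivatives

variable {F : Type*} [NormedAddCommGroup F] [NormedSpace ℝ F] {G : ℝ × ℝ → F} {p : ℝ × ℝ}

lemma hasDerivAt_prodMk_left {E : Type*} [NormedAddCommGroup E] [NormedSpace ℝ E]
    {G : ℝ × E → F} {p : ℝ × E} (hG : DifferentiableAt ℝ G p) :
    HasDerivAt (fun s => G (s, p.2)) (fderiv ℝ G p (1, 0)) p.1 :=
  hG.hasFDerivAt.comp_hasDerivAt p.1 ((hasDerivAt_id p.1).prodMk (hasDerivAt_const p.1 p.2))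

lemma hasDerivAt_prodMk_right (hG : DifferentiableAt ℝ G p) :
    HasDerivAt (fun s => G (p.1, s)) (fderiv ℝ G p (0, 1)) p.2 :=
  hG.hasFDerivAt.comp_hasDerivAt p.2 ((hasDerivAt_const p.2 p.1).prodMk (hasDerivAt_id p.2))

lemma fderiv_prod_apply {u v : F} (hG : DifferentiableAt ℝ G p)
    (hu : HasDerivAt (fun s => G (s, p.2)) u p.1) (hv : HasDerivAt (fun s => G (p.1, s)) v p.2)
    (z : ℝ × ℝ) : fderiv ℝ G p z = z.1 • u + z.2 • v := by
  have hz : z = z.1 • (1, 0) + z.2 • (0, 1) := by ext <;> simp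
  conv_lhs => rw [hz, map_add, map_smul, map_smul]
  rw [hu.unique (hasDerivAt_prodMk_left hG), hv.unique (hasDerivAt_prodMk_right hG)]

end PartialDerivatives

/-! ### The flows along and across the level curves -/

/-- The flow `φ` runs along the level curves of `ω` and, inside a neighbourhood `V` of `K` free of
critical points, `φ` is the flow of the Hamiltonian field while `η` is the flow of
`∇ω / |∇ω|²`, which raises `ω` at unit speed. -/
structure AreLevelFlows (K V : Set E2) (ω : E2 → ℝ) (φ η : Flow ℝ E2) : Prop where
  isOpen : IsOpen V
  subset : K ⊆ V
  gradient_ne_zero : ∀ x ∈ V, gradient ω x ≠ 0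
  contDiff_along : ContDiff ℝ ∞ fun p : ℝ × E2 => φ p.1 p.2
  contDiff_across : ContDiff ℝ ∞ fun p : ℝ × E2 => η p.1 p.2
  apply_along : ∀ x t, ω (φ t x) = ω x
  hasDerivAt_along : ∀ x t, φ t x ∈ V → HasDerivAt (φ · x) (hamiltonianField ω (φ t x)) t
  hasDerivAt_across : ∀ x t, η t x ∈ V →
    HasDerivAt (η · x) ((‖gradient ω (η t x)‖ ^ 2)⁻¹ • gradient ω (η t x)) t

section LevelFlows

variable {K V : Set E2} {ω : E2 → ℝ} {a b l : ℝ} {φ η : Flow ℝ E2} {x : E2} {t : ℝ}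

lemma exists_areLevelFlows (hK : IsCompact K) (hω : ContDiff ℝ ∞ ω)
    (hcrit : ∀ x ∈ K, gradient ω x ≠ 0) : ∃ V φ η, AreLevelFlows K V ω φ η := by
  have hU : IsOpen {x | gradient ω x ≠ 0} :=
    isOpen_ne_fun (contDiff_gradient hω).continuous continuous_const
  obtain ⟨φ, β, hφ_smooth, hβ, hφ⟩ := exists_flow_of_contDiffOn hK isOpen_univ (subset_univ K)
    (contDiff_hamiltonianField hω).contDiffOn
  obtain ⟨η, θ, hη_smooth, hθ, hη⟩ := exists_flow_of_contDiffOn hK hU hcrit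
    (v := fun x => (‖gradient ω x‖ ^ 2)⁻¹ • gradient ω x) <|
    ((contDiff_gradient hω).norm_sq ℝ).contDiffOn.inv (fun x hx => by simpa using hx) |>.smul
      (contDiff_gradient hω).contDiffOn
  obtain ⟨V, hV, hKV, hVall⟩ := eventually_nhdsSet_iff_exists.1
    ((hβ.and hθ).and (hU.mem_nhdsSet.2 hcrit))
  refine ⟨V, φ, η, hV, hKV, fun x hx => (hVall x hx).2, hφ_smooth, hη_smooth, fun x t => ?_,
    fun x t h => ?_, fun x t h => ?_⟩
  · have hderiv : ∀ s, HasDerivAt (fun s => ω (φ s x)) 0 s := fun s => by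
      have hω_at := (hω.differentiable (by simp) (φ s x)).hasFDerivAt
      simpa [fderiv_hamiltonianField_self, Function.comp_def] using
        hω_at.comp_hasDerivAt s (hφ x s)
    simpa using is_const_of_deriv_eq_zero (fun s => (hderiv s).differentiableAt)
      (fun s => (hderiv s).deriv) t 0
  · simpa [(hVall _ h).1.1] using hφ x t
  · simpa [(hVall _ h).1.2] using hη x t

namespace AreLevelFlows

lemma hasDerivAt_apply_across (h : AreLevelFlows K V ω φ η) (hω : ContDiff ℝ ∞ ω)
    (hV : η t x ∈ V) : HasDerivAt (fun t => ω (η t x)) 1 t := by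
  have hω_at := (hω.differentiable (by simp) (η t x)).hasFDerivAt
  have hcomp := hω_at.comp_hasDerivAt t (h.hasDerivAt_across x t hV)
  rwa [fderiv_inv_sq_norm_smul_gradient (h.gradient_ne_zero _ hV)] at hcomp

lemma apply_across_sub (h : AreLevelFlows K V ω φ η) (hω : ContDiff ℝ ∞ ω) {I : Set ℝ}
    (hI : Convex ℝ I) (hV : ∀ r ∈ I, η r x ∈ V) {s : ℝ} (hs : s ∈ I) (ht : t ∈ I) :
    ω (η t x) - ω (η s x) = t - s := by
  have hderiv : ∀ r ∈ I, HasDerivWithinAt (fun r => ω (η r x) - r) 0 I r := fun r hr =>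
    ((h.hasDerivAt_apply_across hω (hV r hr)).sub (hasDerivAt_id r)).hasDerivWithinAt.congr_deriv
      (sub_self 1)
  have hconst := hI.norm_image_sub_le_of_norm_hasDerivWithin_le (C := 0) hderiv (by simp) hs ht
  rw [zero_mul, norm_le_zero_iff] at hconst
  linarith

lemma along_mem (h : AreLevelFlows K V ω φ η) (hA : IsAnnularFunction K ω a b) (hx : x ∈ K)
    (hωx : ω x ∈ Ioo a b) (t : ℝ) : φ t x ∈ K := by
  have hcont : Continuous (φ · x) := φ.continuous continuous_id continuous_const
  have hT : (φ · x) ⁻¹' K = (φ · x) ⁻¹' interior K := by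
    ext t
    simp [hA.interior_eq, h.apply_along, hωx.1, hωx.2]
  have hclopen : IsClopen ((φ · x) ⁻¹' K) :=
    ⟨hA.isCompact.isClosed.preimage hcont, hT ▸ isOpen_interior.preimage hcont⟩
  exact eq_univ_iff_forall.1 (hclopen.eq_univ ⟨0, by simpa using hx⟩) t

lemma across_mem (h : AreLevelFlows K V ω φ η) (hA : IsAnnularFunction K ω a b) (hx : x ∈ K)
    (hωx : ω x ∈ Ioo a b) (ht : ω x + t ∈ Ioo a b) : η t x ∈ K ∧ ω (η t x) = ω x + t := by
  have hcont : Continuous (η · x) := η.continuous continuous_id continuous_const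
  let J : Set ℝ := Ioo (a - ω x) (b - ω x)
  have hJ : ∀ s, s ∈ J ↔ ω x + s ∈ Ioo a b := fun s => by
    simp only [J, mem_Ioo, sub_lt_iff_lt_add', lt_sub_iff_add_lt']
  let T : Set ℝ := {s | η s x ∈ interior K ∧ ω (η s x) = ω x + s}
  have hT_open : IsOpen T := Metric.isOpen_iff.2 fun s ⟨hs, hωs⟩ => by
    obtain ⟨ε, hε, hball⟩ := Metric.isOpen_iff.1 (isOpen_interior.preimage hcont) s hs
    refine ⟨ε, hε, fun r hr => ⟨hball hr, ?_⟩⟩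
    have := h.apply_across_sub hA.contDiff (convex_ball s ε)
      (fun r hr => h.subset (interior_subset (hball hr))) (Metric.mem_ball_self hε) hr
    linarith
  have hclosed : IsClosed {s | η s x ∈ K ∧ ω (η s x) = ω x + s} :=
    (hA.isCompact.isClosed.preimage hcont).inter
      (isClosed_eq (hA.contDiff.continuous.comp hcont) (by fun_prop))
  have hzero : (0 : ℝ) ∈ J ∩ T :=
    ⟨(hJ 0).2 (by simpa using hωx), by simp [T, hA.interior_eq, hx, hωx.1, hωx.2]⟩
  have hJT : J ⊆ T := isPreconnected_Ioo.subset_of_closure_inter_subset hT_open ⟨0, hzero⟩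
    fun s ⟨hs, hsJ⟩ => by
      obtain ⟨hsK, hωs⟩ :=
        closure_minimal (fun r (hr : r ∈ T) => And.intro (interior_subset hr.1) hr.2) hclosed hs
      exact ⟨hA.interior_eq.superset ⟨hsK, hωs.symm ▸ (hJ s).1 hsJ⟩, hωs⟩
  exact ⟨interior_subset (hJT ((hJ t).2 ht)).1, (hJT ((hJ t).2 ht)).2⟩

lemma isPreconnected_level (h : AreLevelFlows K V ω φ η) (hA : IsAnnularFunction K ω a b)
    (hl : l ∈ Ioo a b) : IsPreconnected {x ∈ K | ω x = l} := by
  have himage : {x ∈ K | ω x = l} = (fun x => η (l - ω x) x) '' interior K := by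
    rw [hA.interior_eq]
    ext x
    constructor
    · rintro ⟨hx, rfl⟩
      exact ⟨x, ⟨hx, hl⟩, by simp⟩
    · rintro ⟨y, ⟨hy, hωy⟩, rfl⟩
      simpa using h.across_mem hA hy hωy (t := l - ω y) (by simpa using hl)
  rw [himage]
  exact hA.isConnected_interior.isPreconnected.image _
    (η.continuous (continuous_const.sub hA.contDiff.continuous) continuous_id).continuousOn

lemma eventually_exists_along_eq (h : AreLevelFlows K V ω φ η) (hA : IsAnnularFunction K ω a b)
    (hl : l ∈ Ioo a b) {p : E2} (hp : p ∈ {x ∈ K | ω x = l}) :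
    ∀ᶠ x in 𝓝[{x ∈ K | ω x = l}] p, ∃ t < 1, φ t p = x := by
  obtain ⟨hpK, hpl⟩ := hp
  have hpV : p ∈ V := h.subset hpK
  let G : ℝ × ℝ → E2 := fun z => η z.2 (φ z.1 p)
  have hG : ContDiff ℝ ∞ G :=
    h.contDiff_across.comp
      (contDiff_snd.prodMk (h.contDiff_along.comp (contDiff_fst.prodMk contDiff_const)))
  have hG_zero : G (0, 0) = p := by simp [G]
  have hsurj : (fderiv ℝ G (0, 0)).range = ⊤ := LinearMap.range_eq_top.2 fun v => by
    refine ⟨_, (fderiv_prod_apply (hG.differentiable (by simp) _) ?_ ?_ (_, _)).trans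
      (eq_smul_hamiltonianField_add_smul_gradient (h.gradient_ne_zero p hpV) v).symm⟩
    · simpa [G] using h.hasDerivAt_along p 0 (by simpa using hpV)
    · simpa [G] using h.hasDerivAt_across p 0 (by simpa using hpV)
  have hmap := (hG.contDiffAt.hasStrictFDerivAt (by simp)).map_nhds_eq_of_surj hsurj
  have hO : {z : ℝ × ℝ | z.1 < 1 ∧ l + z.2 ∈ Ioo a b} ∈ 𝓝 (0, 0) :=
    ((isOpen_lt continuous_fst continuous_const).inter
      (isOpen_Ioo.preimage (continuous_const.add continuous_snd))).mem_nhds (by simpa using hl)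
  have himage := image_mem_map (m := G) hO
  rw [hmap, hG_zero] at himage
  filter_upwards [mem_nhdsWithin_of_mem_nhds himage, self_mem_nhdsWithin]
  rintro _ ⟨⟨t, s⟩, ⟨ht, hs⟩, rfl⟩ ⟨-, hωG⟩
  have hωφ : ω (φ t p) = l := (h.apply_along p t).trans hpl
  have hacross := (h.across_mem hA (h.along_mem hA hpK (hpl ▸ hl) t) (hωφ ▸ hl) (hωφ ▸ hs)).2
  obtain rfl : s = 0 := by
    rw [hωφ] at hacross
    linarith [hωG.symm.trans hacross]
  exact ⟨t, ht, by simp [G]⟩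

theorem exists_periodic_along (h : AreLevelFlows K V ω φ η) (hA : IsAnnularFunction K ω a b)
    (hl : l ∈ Ioo a b) : ∃ x ∈ K, ω x = l ∧ ∃ P > 0, Function.Periodic (φ · x) P ∧
      InjOn (φ · x) (Ico 0 P) ∧ (φ · x) '' Ico 0 P = {x ∈ K | ω x = l} := by
  obtain ⟨x, hx, hxl⟩ := hA.image_eq.superset (Ioo_subset_Icc_self hl)
  have hL_compact : IsCompact {x ∈ K | ω x = l} :=
    hA.isCompact.inter_right (isClosed_eq hA.contDiff.continuous continuous_const)
  have hxV : φ 0 x ∈ V := by simpa using h.subset hx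
  have hiso : ∀ᶠ t in 𝓝[>] (0 : ℝ), φ t x ≠ x :=
    ((h.hasDerivAt_along x 0 hxV).eventually_ne
      (hamiltonianField_ne_zero (h.gradient_ne_zero _ hxV))).filter_mono
      (nhdsWithin_mono _ fun t ht => (mem_Ioi.1 ht).ne')
  exact ⟨x, hx, hxl, exists_periodic_injOn_image_eq hL_compact (h.isPreconnected_level hA hl)
    ⟨hx, hxl⟩ (fun t => ⟨h.along_mem hA hx (hxl ▸ hl) t, (h.apply_along x t).trans hxl⟩)
    (fun p hp => h.eventually_exists_along_eq hA hl hp) hiso⟩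

end AreLevelFlows

end LevelFlows

/-! ### Level coordinates -/

/-- The Hamiltonian time elapsed per unit of the parameter `t` along the curve `t ↦ Γ (t, y)`: when
this curve lies on a level of `ω`, it is the factor `c` in `∂Γ/∂t = c • hamiltonianField ω Γ`. -/
def levelSpeed (ω : E2 → ℝ) (Γ : ℝ × ℝ → E2) (p : ℝ × ℝ) : ℝ :=
  inner ℝ (hamiltonianField ω (Γ p)) (fderiv ℝ Γ p (1, 0)) / ‖gradient ω (Γ p)‖ ^ 2

/-- Global coordinates `(t, y)` on a neighbourhood of an annulus, `P`-periodic in `t`, in which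
`ω` is the coordinate `y` and `t` increases along the Hamiltonian field. They are
defined and regular for `y` up to a margin `δ` outside of `[a, b]`. -/
structure IsLevelChart (K : Set E2) (ω : E2 → ℝ) (a b P δ : ℝ) (Γ : ℝ × ℝ → E2) : Prop
    extends IsAnnularFunction K ω a b where
  period_pos : 0 < P
  margin_pos : 0 < δ
  contDiff_chart : ContDiff ℝ ∞ Γ
  chart_add_period : ∀ t y, Γ (t + P, y) = Γ (t, y)
  apply_chart : ∀ t, ∀ y ∈ Ioo (a - δ) (b + δ), ω (Γ (t, y)) = y
  injOn_chart : ∀ y, InjOn (fun t => Γ (t, y)) (Ico 0 P)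
  chart_mem : ∀ t, ∀ y ∈ Icc a b, Γ (t, y) ∈ K
  exists_chart_eq : ∀ x ∈ K, ∃ t ∈ Ico 0 P, Γ (t, ω x) = x
  gradient_chart_ne_zero : ∀ t, ∀ y ∈ Ioo (a - δ) (b + δ), gradient ω (Γ (t, y)) ≠ 0
  levelSpeed_pos : ∀ t, ∀ y ∈ Ioo (a - δ) (b + δ), 0 < levelSpeed ω Γ (t, y)

section LevelSpeed

variable {ω : E2 → ℝ} {Γ : ℝ × ℝ → E2} {p : ℝ × ℝ}

lemma contDiffAt_levelSpeed (hω : ContDiff ℝ ∞ ω) (hΓ : ContDiff ℝ ∞ Γ)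
    (hp : gradient ω (Γ p) ≠ 0) : ContDiffAt ℝ ∞ (levelSpeed ω Γ) p := by
  have hX : ContDiff ℝ ∞ fun p => hamiltonianField ω (Γ p) := (contDiff_hamiltonianField hω).comp hΓ
  have hD : ContDiff ℝ ∞ fun p => fderiv ℝ Γ p (1, 0) :=
    (hΓ.fderiv_right (by simp)).clm_apply contDiff_const
  exact (hX.inner ℝ hD).contDiffAt.div
    (((contDiff_gradient hω).comp hΓ).norm_sq ℝ).contDiffAt (by simpa using hp)

lemma levelSpeed_add_period {P : ℝ} (hΓP : ∀ t y, Γ (t + P, y) = Γ (t, y)) (t y : ℝ) :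
    levelSpeed ω Γ (t + P, y) = levelSpeed ω Γ (t, y) := by
  have htranslate : (fun p => Γ (p + (P, 0))) = Γ := funext fun ⟨t, y⟩ => by simpa using hΓP t y
  have hfderiv : fderiv ℝ Γ (t + P, y) = fderiv ℝ Γ (t, y) := by
    conv_rhs => rw [← htranslate, fderiv_comp_add_right]
    simp
  rw [levelSpeed, levelSpeed, hfderiv, hΓP]

lemma fderiv_eq_levelSpeed_smul (hω : DifferentiableAt ℝ ω (Γ p)) (hΓ : DifferentiableAt ℝ Γ p)
    (hlevel : ∀ t, ω (Γ (t, p.2)) = p.2) (hp : gradient ω (Γ p) ≠ 0) :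
    fderiv ℝ Γ p (1, 0) = levelSpeed ω Γ p • hamiltonianField ω (Γ p) := by
  have hcomp := hω.hasFDerivAt.comp_hasDerivAt p.1 (hasDerivAt_prodMk_left hΓ)
  have hzero : fderiv ℝ ω (Γ p) (fderiv ℝ Γ p (1, 0)) = 0 :=
    hcomp.unique ((hasDerivAt_const p.1 p.2).congr_of_eventuallyEq (.of_forall hlevel))
  have hdecomp := eq_smul_hamiltonianField_add_smul_gradient hp (fderiv ℝ Γ p (1, 0))
  rwa [hzero, zero_smul, add_zero] at hdecomp

end LevelSpeed

/-- The coordinates obtained by running along the level of `x₀` for time `t`, then across the levels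
until the value `y`. -/
def flowChart (φ η : Flow ℝ E2) (ω : E2 → ℝ) (x₀ : E2) (p : ℝ × ℝ) : E2 :=
  η (p.2 - ω x₀) (φ p.1 x₀)

lemma Ioo_subset_thickening_Icc {a b δ : ℝ} (hab : a ≤ b) (hδ : 0 < δ) :
    Ioo (a - δ) (b + δ) ⊆ Metric.thickening δ (Icc a b) := by
  rintro y ⟨hay, hyb⟩
  rw [Metric.mem_thickening_iff]
  rcases lt_or_ge y a with hya | hya
  · exact ⟨a, left_mem_Icc.2 hab, by rw [Real.dist_eq, abs_lt]; constructor <;> linarith⟩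
  rcases le_or_gt y b with hby | hby
  · exact ⟨y, ⟨hya, hby⟩, by simpa using hδ⟩
  · exact ⟨b, right_mem_Icc.2 hab, by rw [Real.dist_eq, abs_lt]; constructor <;> linarith⟩

namespace AreLevelFlows

variable {K V : Set E2} {ω : E2 → ℝ} {a b P δ : ℝ} {φ η : Flow ℝ E2} {x₀ : E2} {t y : ℝ}

lemma contDiff_flowChart (h : AreLevelFlows K V ω φ η) :
    ContDiff ℝ ∞ (flowChart φ η ω x₀) :=
  h.contDiff_across.comp ((contDiff_snd.sub contDiff_const).prodMk
    (h.contDiff_along.comp (contDiff_fst.prodMk contDiff_const)))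

lemma across_flowChart (φ η : Flow ℝ E2) (ω : E2 → ℝ) (x₀ : E2) (t y : ℝ) :
    η (ω x₀ - y) (flowChart φ η ω x₀ (t, y)) = φ t x₀ := by
  rw [flowChart, ← η.map_add, sub_add_sub_cancel', sub_self, η.map_zero_apply]

lemma flowChart_mem (h : AreLevelFlows K V ω φ η) (hA : IsAnnularFunction K ω a b) (hx₀ : x₀ ∈ K)
    (hωx₀ : ω x₀ ∈ Ioo a b) (t : ℝ) (hy : y ∈ Icc a b) : flowChart φ η ω x₀ (t, y) ∈ K := by
  have hcont : Continuous fun y => flowChart φ η ω x₀ (t, y) :=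
    h.contDiff_flowChart.continuous.comp (Continuous.prodMk_right t)
  have hmaps : MapsTo (fun y => flowChart φ η ω x₀ (t, y)) (Ioo a b) K := fun y hy =>
    (h.across_mem hA (h.along_mem hA hx₀ hωx₀ t) (by rwa [h.apply_along])
      (by simpa [h.apply_along] using hy)).1
  rw [← closure_Ioo hA.lt.ne] at hy
  exact hA.isCompact.isClosed.closure_subset (hmaps.closure hcont hy)

lemma exists_margin (h : AreLevelFlows K V ω φ η) (hA : IsAnnularFunction K ω a b) (hx₀ : x₀ ∈ K)
    (hωx₀ : ω x₀ ∈ Ioo a b) (hP : 0 < P) (hper : Function.Periodic (φ · x₀) P) :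
    ∃ δ > 0, ∀ t, ∀ y ∈ Ioo (a - δ) (b + δ), flowChart φ η ω x₀ (t, y) ∈ V := by
  have hO : IsOpen (flowChart φ η ω x₀ ⁻¹' V) := h.isOpen.preimage h.contDiff_flowChart.continuous
  have hsub : Icc 0 P ×ˢ Icc a b ⊆ flowChart φ η ω x₀ ⁻¹' V := fun p hp =>
    h.subset (h.flowChart_mem hA hx₀ hωx₀ p.1 hp.2)
  obtain ⟨T, W, -, hW, hPT, habW, hTW⟩ := generalized_tube_lemma isCompact_Icc isCompact_Icc hO hsub
  obtain ⟨δ, hδ, hδW⟩ := isCompact_Icc.exists_thickening_subset_open hW habW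
  refine ⟨δ, hδ, fun t y hy => ?_⟩
  obtain ⟨s, hs, hts⟩ := hper.exists_mem_Ico₀ hP t
  have hyW : y ∈ W := hδW (Ioo_subset_thickening_Icc hA.lt.le hδ hy)
  have hV : flowChart φ η ω x₀ (s, y) ∈ V := hTW (mk_mem_prod (hPT (Ico_subset_Icc_self hs)) hyW)
  simpa only [flowChart, hts] using hV

lemma apply_flowChart (h : AreLevelFlows K V ω φ η) (hω : ContDiff ℝ ∞ ω) {I : Set ℝ}
    (hI : Convex ℝ I) (hV : ∀ y ∈ I, flowChart φ η ω x₀ (t, y) ∈ V) (hx₀ : ω x₀ ∈ I) (hy : y ∈ I) :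
    ω (flowChart φ η ω x₀ (t, y)) = y := by
  have hshift := h.apply_across_sub (x := φ t x₀) hω (hI.translate_preimage_right (ω x₀))
    (fun r hr => by simpa [flowChart] using hV _ hr) (s := 0) (t := y - ω x₀) (by simpa using hx₀)
    (by simpa using hy)
  rw [η.map_zero_apply, h.apply_along] at hshift
  rw [flowChart]
  linarith

lemma fderiv_flowChart_ne_zero (h : AreLevelFlows K V ω φ η) (hφ : ∀ t, φ t x₀ ∈ V) (p : ℝ × ℝ) :
    fderiv ℝ (flowChart φ η ω x₀) p (1, 0) ≠ 0 := fun hzero => by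
  have hη : Differentiable ℝ (η (ω x₀ - p.2)) :=
    (h.contDiff_across.comp (contDiff_const.prodMk contDiff_id)).differentiable (by simp)
  have hcomp := (hη _).hasFDerivAt.comp_hasDerivAt p.1
    (hasDerivAt_prodMk_left (h.contDiff_flowChart (x₀ := x₀) |>.differentiable (by simp) p))
  simp only [Function.comp_def, across_flowChart, hzero, map_zero] at hcomp
  exact hamiltonianField_ne_zero (h.gradient_ne_zero _ (hφ p.1))
    ((h.hasDerivAt_along x₀ p.1 (hφ p.1)).unique hcomp)

lemma levelSpeed_flowChart_base (h : AreLevelFlows K V ω φ η) (hφ : φ t x₀ ∈ V) :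
    levelSpeed ω (flowChart φ η ω x₀) (t, ω x₀) = 1 := by
  have hbase : ∀ s, flowChart φ η ω x₀ (s, ω x₀) = φ s x₀ := fun s => by simp [flowChart]
  have hD := hasDerivAt_prodMk_left (p := (t, ω x₀))
    (h.contDiff_flowChart (x₀ := x₀).differentiable (by simp) _)
  simp only [hbase] at hD
  have hne : ‖gradient ω (φ t x₀)‖ ^ 2 ≠ 0 := by simpa using h.gradient_ne_zero _ hφ
  rw [levelSpeed, hD.unique (h.hasDerivAt_along x₀ t hφ), hbase, real_inner_self_eq_norm_sq,
    norm_hamiltonianField, div_self hne]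

lemma levelSpeed_flowChart_pos (h : AreLevelFlows K V ω φ η) (hω : ContDiff ℝ ∞ ω)
    (hφ : ∀ t, φ t x₀ ∈ V) {I : Set ℝ} (hI : Convex ℝ I) (hx₀ : ω x₀ ∈ I)
    (hV : ∀ t, ∀ y ∈ I, flowChart φ η ω x₀ (t, y) ∈ V) (t : ℝ) (hy : y ∈ I) :
    0 < levelSpeed ω (flowChart φ η ω x₀) (t, y) := by
  by_contra! hneg
  have hcont : ContinuousOn (fun y => levelSpeed ω (flowChart φ η ω x₀) (t, y)) I := fun z hz =>
    ((contDiffAt_levelSpeed hω h.contDiff_flowChart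
      (h.gradient_ne_zero _ (hV t z hz))).continuousAt.comp
      (Continuous.prodMk_right t).continuousAt).continuousWithinAt
  obtain ⟨z, hz, hzero⟩ := hI.isPreconnected.intermediate_value hy hx₀ hcont
    ⟨hneg, (zero_le_one' ℝ).trans_eq (h.levelSpeed_flowChart_base (hφ t)).symm⟩
  refine h.fderiv_flowChart_ne_zero hφ (t, z) ?_
  rw [fderiv_eq_levelSpeed_smul (hω.differentiable (by simp) _)
    (h.contDiff_flowChart.differentiable (by simp) _)
    (fun s => h.apply_flowChart hω hI (hV s) hx₀ hz) (h.gradient_ne_zero _ (hV t z hz)),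
    show levelSpeed _ _ (t, z) = 0 from hzero, zero_smul]

lemma exists_flowChart_eq (h : AreLevelFlows K V ω φ η) (hA : IsAnnularFunction K ω a b)
    (hωx₀ : ω x₀ ∈ Ioo a b) (horbit : (φ · x₀) '' Ico 0 P = {x ∈ K | ω x = ω x₀}) {x : E2}
    (hx : x ∈ K) : ∃ t ∈ Ico 0 P, flowChart φ η ω x₀ (t, ω x) = x := by
  have hcont : Continuous fun x => η (ω x₀ - ω x) x :=
    η.continuous (continuous_const.sub hA.contDiff.continuous) continuous_id
  have hclosed : IsClosed {x ∈ K | ω x = ω x₀} :=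
    hA.isCompact.isClosed.inter (isClosed_eq hA.contDiff.continuous continuous_const)
  have hmaps : MapsTo (fun x => η (ω x₀ - ω x) x) (interior K) {x ∈ K | ω x = ω x₀} := by
    rw [hA.interior_eq]
    rintro x ⟨hxK, hωx⟩
    simpa using h.across_mem hA hxK hωx (t := ω x₀ - ω x) (by simpa using hωx₀)
  have hmem := hclosed.closure_subset
    (map_mem_closure hcont (hA.subset_closure_interior hx) hmaps)
  obtain ⟨t, ht, hφt⟩ := horbit.superset hmem
  refine ⟨t, ht, ?_⟩
  simp only at hφt
  simp [flowChart, hφt, ← η.map_add]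

end AreLevelFlows

theorem IsAnnularFunction.exists_isLevelChart {K : Set E2} {ω : E2 → ℝ} {a b : ℝ}
    (hA : IsAnnularFunction K ω a b) : ∃ P δ Γ, IsLevelChart K ω a b P δ Γ := by
  obtain ⟨V, φ, η, h⟩ := exists_areLevelFlows hA.isCompact hA.contDiff hA.gradient_ne_zero
  obtain ⟨l, hl⟩ := exists_between hA.lt
  obtain ⟨x₀, hx₀, rfl, P, hP, hper, hinj, horbit⟩ := h.exists_periodic_along hA hl
  obtain ⟨δ, hδ, hV⟩ := h.exists_margin hA hx₀ hl hP hper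
  have hφ : ∀ t, φ t x₀ ∈ V := fun t => h.subset (h.along_mem hA hx₀ hl t)
  have hl' : ω x₀ ∈ Ioo (a - δ) (b + δ) := ⟨by linarith [hl.1], by linarith [hl.2]⟩
  exact ⟨P, δ, flowChart φ η ω x₀, hA, hP, hδ, h.contDiff_flowChart,
    fun t y => congrArg (η _) (hper t),
    fun t y hy => h.apply_flowChart hA.contDiff (convex_Ioo _ _) (hV t) hl' hy,
    fun y s hs t ht hst => hinj hs ht <| by
      simpa only [AreLevelFlows.across_flowChart] using congrArg (η (ω x₀ - y)) hst,
    fun t y hy => h.flowChart_mem hA hx₀ hl t hy, fun x hx => h.exists_flowChart_eq hA hl horbit hx,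
    fun t y hy => h.gradient_ne_zero _ (hV t y hy),
    fun t y hy => h.levelSpeed_flowChart_pos hA.contDiff hφ (convex_Ioo _ _) hl' hV t hy⟩

/-! ### Arc length -/

section ArcLength

lemma measure_le_of_forall_exists_nhds {X : Type*} [TopologicalSpace X] [SecondCountableTopology X]
    [MeasurableSpace X] [OpensMeasurableSpace X] {μ ν : Measure X}
    (h : ∀ x, ∃ U ∈ 𝓝 x, ∀ A ⊆ U, MeasurableSet A → μ A ≤ ν A) : μ ≤ ν := by
  choose U hU hle using h
  obtain ⟨c, hc, hcover⟩ :=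
    TopologicalSpace.countable_cover_nhds fun x => interior_mem_nhds.2 (hU x)
  rcases c.eq_empty_or_nonempty with rfl | hne
  · have : IsEmpty X := univ_eq_empty_iff.1 (by simpa using hcover.symm)
    exact (Subsingleton.elim μ ν).le
  obtain ⟨x, rfl⟩ := hc.exists_eq_range hne
  let D := disjointed fun n => interior (U (x n))
  have hD : ∀ n, MeasurableSet (D n) := .disjointed fun n => isOpen_interior.measurableSet
  have hsum : ∀ (ρ : Measure X) (A : Set X), MeasurableSet A → ρ A = ∑' n, ρ (A ∩ D n) := by
    intro ρ A hA
    rw [← measure_iUnion (fun m n hmn => (disjoint_disjointed _ hmn).mono inter_subset_right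
      inter_subset_right) fun n => hA.inter (hD n), ← inter_iUnion, iUnion_disjointed,
      ← biUnion_range (g := fun y => interior (U y)), hcover, inter_univ]
  refine Measure.le_iff.2 fun A hA => ?_
  rw [hsum μ A hA, hsum ν A hA]
  exact ENNReal.tsum_le_tsum fun n => hle (x n) _
    (inter_subset_right.trans ((disjointed_subset _ n).trans interior_subset)) (hA.inter (hD n))

lemma measure_le_of_forall_le_add_smul {X : Type*} [TopologicalSpace X]
    [SecondCountableTopology X] [MeasurableSpace X] [OpensMeasurableSpace X] {μ ν ρ : Measure X}
    [IsLocallyFiniteMeasure ρ] (h : ∀ ε : NNReal, 0 < ε → μ ≤ ν + ε • ρ) : μ ≤ ν := by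
  refine measure_le_of_forall_exists_nhds fun x => ?_
  obtain ⟨U, hU, hρU⟩ := ρ.finiteAt_nhds x
  refine ⟨U, hU, fun A hA _ => ENNReal.le_of_forall_pos_le_add fun ε hε _ => ?_⟩
  obtain ⟨r, hr, hrA⟩ := ENNReal.exists_nnreal_pos_mul_lt ((measure_mono hA).trans_lt hρU).ne
    (ENNReal.coe_ne_zero.2 hε.ne')
  calc μ A ≤ ν A + r * ρ A := h r hr A
    _ ≤ ν A + ε := by gcongr

lemma exists_measure_apply_eq_image {X : Type*} [TopologicalSpace X] [T2Space X]
    [MeasurableSpace X] [BorelSpace X] (μ : Measure X) {γ : ℝ → X} (hγ : Continuous γ) {s : Set ℝ}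
    (hs : MeasurableSet s) (hinj : InjOn γ s) :
    ∃ m : Measure ℝ, ∀ A, MeasurableSet A → m A = μ (γ '' (A ∩ s)) := by
  refine ⟨(μ.comap (s.domRestrict γ)).map (↑), fun A hA => ?_⟩
  rw [Measure.map_apply measurable_subtype_coe hA,
    Measure.comap_apply _ hinj.injective ?_ _ (measurable_subtype_coe hA), image_domRestrict]
  rintro _ ⟨B, hB, rfl⟩
  rw [image_domRestrict]
  exact (hB.inter hs).image_of_continuousOn_injOn hγ.continuousOn (hinj.mono inter_subset_right)

variable {E : Type*} [NormedAddCommGroup E] [NormedSpace ℝ E] [MeasurableSpace E] [BorelSpace E]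
  {γ : ℝ → E} {v : E} {s A : Set ℝ} {ε : NNReal}

lemma hausdorffMeasure_image_le_of_approximatesLinearOn
    (h : ApproximatesLinearOn γ (ContinuousLinearMap.toSpanSingleton ℝ v) A ε) :
    μH[1] (γ '' A) ≤ (‖v‖₊ + ε) * volume A := by
  have hle := (lipschitzOnWith_iff_restrict.2 h.lipschitz).hausdorffMeasure_image_le zero_le_one
  rwa [ENNReal.rpow_one, hausdorffMeasure_real, ContinuousLinearMap.nnnorm_toSpanSingleton,
    ENNReal.coe_add] at hle

lemma nnnorm_mul_volume_le_of_approximatesLinearOn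
    (h : ApproximatesLinearOn γ (ContinuousLinearMap.toSpanSingleton ℝ v) A ε) :
    ‖v‖₊ * volume A ≤ μH[1] (γ '' A) + ε * volume A := by
  rcases le_or_gt ‖v‖₊ ε with hle | hlt
  · exact le_add_left (by gcongr)
  have hpos : 0 < ‖v‖₊ - ε := tsub_pos_of_lt hlt
  have hanti : AntilipschitzWith (‖v‖₊ - ε)⁻¹ (A.domRestrict γ) :=
    AntilipschitzWith.of_le_mul_dist fun s t => by
      have htri : ‖((s : ℝ) - t) • v‖ ≤ ε * ‖(s : ℝ) - t‖ + ‖γ s - γ t‖ :=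
        (norm_le_norm_sub_add _ _).trans (add_le_add_left (by
          rw [norm_sub_rev]
          simpa using h s s.2 t t.2) _)
      rw [norm_smul] at htri
      rw [NNReal.coe_inv, inv_mul_eq_div, le_div_iff₀ (NNReal.coe_pos.2 hpos),
        NNReal.coe_sub hlt.le, coe_nnnorm, Subtype.dist_eq, dist_eq_norm, dist_eq_norm]
      simp only [domRestrict_apply]
      linarith
  have hle := hanti.le_hausdorffMeasure_image zero_le_one univ
  rw [ENNReal.rpow_one, image_univ, range_domRestrict,
    ← isometry_subtype_coe.hausdorffMeasure_image (.inl zero_le_one), image_univ,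
    Subtype.range_coe, hausdorffMeasure_real] at hle
  calc ‖v‖₊ * volume A
      = (‖v‖₊ - ε : NNReal) * volume A + ε * volume A := by
        rw [← add_mul, ← ENNReal.coe_add, tsub_add_cancel_of_le hlt.le]
    _ ≤ (‖v‖₊ - ε : NNReal) * (((‖v‖₊ - ε)⁻¹ : NNReal) * μH[1] (γ '' A)) + ε * volume A := by
        gcongr
    _ = μH[1] (γ '' A) + ε * volume A := by
        rw [← mul_assoc, ← ENNReal.coe_mul, mul_inv_cancel₀ hpos.ne', ENNReal.coe_one, one_mul]

lemma exists_nhds_hausdorffMeasure_image_le (hγ : ContDiff ℝ 1 γ) (hε : 0 < ε) (t₀ : ℝ) :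
    ∃ U ∈ 𝓝 t₀, ∀ A ⊆ U, MeasurableSet A →
      μH[1] (γ '' A) ≤ (∫⁻ t in A, ‖deriv γ t‖₊) + 2 * ε * volume A ∧
      ∫⁻ t in A, ‖deriv γ t‖₊ ≤ μH[1] (γ '' A) + 2 * ε * volume A := by
  obtain ⟨U, hU, happrox⟩ := hγ.contDiffAt.hasStrictDerivAt (x := t₀) one_ne_zero
    |>.hasStrictFDerivAt.approximates_deriv_on_nhds (.inr hε)
  have hclose : ∀ᶠ t in 𝓝 t₀, ‖deriv γ t‖₊ < ‖deriv γ t₀‖₊ + ε ∧ ‖deriv γ t₀‖₊ < ‖deriv γ t‖₊ + ε :=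
    have hcont := (hγ.continuous_deriv le_rfl).nnnorm
    (hcont.continuousAt.eventually_lt continuousAt_const (lt_add_of_pos_right _ hε)).and
      (continuousAt_const.eventually_lt (hcont.add continuous_const).continuousAt
        (lt_add_of_pos_right _ hε))
  refine ⟨U ∩ {t | _}, inter_mem hU hclose, fun A hA hAm => ?_⟩
  have hmono := happrox.mono_set (hA.trans inter_subset_left)
  have hint_le : ∫⁻ t in A, ‖deriv γ t‖₊ ≤ (‖deriv γ t₀‖₊ + ε) * volume A := by
    rw [← setLIntegral_const]
    exact setLIntegral_mono' hAm fun t ht => mod_cast (hA ht).2.1.le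
  have hle_int : ‖deriv γ t₀‖₊ * volume A ≤ (∫⁻ t in A, ‖deriv γ t‖₊) + ε * volume A := by
    rw [← setLIntegral_const, ← setLIntegral_const A (ε : ENNReal),
      ← lintegral_add_right _ measurable_const]
    exact setLIntegral_mono' hAm fun t ht => mod_cast (hA ht).2.2.le
  constructor
  · calc μH[1] (γ '' A) ≤ (‖deriv γ t₀‖₊ + ε) * volume A :=
          hausdorffMeasure_image_le_of_approximatesLinearOn hmono
      _ ≤ (∫⁻ t in A, ‖deriv γ t‖₊) + ε * volume A + ε * volume A := by
          rw [add_mul]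
          gcongr
      _ = _ := by ring
  · calc ∫⁻ t in A, ‖deriv γ t‖₊ ≤ (‖deriv γ t₀‖₊ + ε) * volume A := hint_le
      _ ≤ μH[1] (γ '' A) + ε * volume A + ε * volume A := by
          rw [add_mul]
          gcongr
          exact nnnorm_mul_volume_le_of_approximatesLinearOn hmono
      _ = _ := by ring

theorem map_withDensity_nnnorm_deriv_eq_hausdorffMeasure (hγ : ContDiff ℝ 1 γ)
    (hs : MeasurableSet s) (hinj : InjOn γ s) :
    ((volume.restrict s).withDensity fun t => ‖deriv γ t‖₊).map γ = μH[1].restrict (γ '' s) := by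
  obtain ⟨m, hm⟩ := exists_measure_apply_eq_image μH[1] hγ.continuous hs hinj
  set n := (volume.restrict s).withDensity fun t => (‖deriv γ t‖₊ : ENNReal) with hn
  have hlocal : ∀ ε : NNReal, 0 < ε → ∀ t₀, ∃ U ∈ 𝓝 t₀, ∀ A ⊆ U, MeasurableSet A →
      m A ≤ (n + ε • volume : Measure ℝ) A ∧ n A ≤ (m + ε • volume : Measure ℝ) A := by
    intro ε hε t₀
    obtain ⟨U, hU, hle⟩ := exists_nhds_hausdorffMeasure_image_le hγ (half_pos hε) t₀
    refine ⟨U, hU, fun A hA hAm => ?_⟩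
    have hvol : 2 * (ε / 2 : NNReal) * volume (A ∩ s) ≤ ε * volume A := by
      rw [← ENNReal.coe_ofNat, ← ENNReal.coe_mul, mul_div_cancel₀ _ two_ne_zero]
      gcongr
      exact inter_subset_left
    obtain ⟨hle_int, hint_le⟩ := hle (A ∩ s) (inter_subset_left.trans hA) (hAm.inter hs)
    simp only [Measure.add_apply, Measure.smul_apply, ENNReal.smul_def, smul_eq_mul, hm A hAm, hn,
      withDensity_apply _ hAm, Measure.restrict_restrict hAm]
    exact ⟨hle_int.trans (by gcongr), hint_le.trans (by gcongr)⟩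
  have hmn : m = n := le_antisymm
    (measure_le_of_forall_le_add_smul fun ε hε => measure_le_of_forall_exists_nhds fun t₀ =>
      (hlocal ε hε t₀).imp fun U hU => ⟨hU.1, fun A hA hAm => (hU.2 A hA hAm).1⟩)
    (measure_le_of_forall_le_add_smul fun ε hε => measure_le_of_forall_exists_nhds fun t₀ =>
      (hlocal ε hε t₀).imp fun U hU => ⟨hU.1, fun A hA hAm => (hU.2 A hA hAm).2⟩)
  ext B hB
  have hB' := hγ.continuous.measurable hB
  rw [← hmn, Measure.map_apply hγ.continuous.measurable hB, hm _ hB', Measure.restrict_apply hB,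
    inter_comm, image_inter_preimage, inter_comm]

theorem setIntegral_image_hausdorffMeasure {F : Type*} [NormedAddCommGroup F] [NormedSpace ℝ F]
    (hγ : ContDiff ℝ 1 γ) (hs : MeasurableSet s) (hinj : InjOn γ s) {f : E → F}
    (hf : StronglyMeasurable f) :
    ∫ x in γ '' s, f x ∂μH[1] = ∫ t in s, ‖deriv γ t‖ • f (γ t) := by
  rw [← map_withDensity_nnnorm_deriv_eq_hausdorffMeasure hγ hs hinj,
    integral_map hγ.continuous.aemeasurable hf.aestronglyMeasurable,
    integral_withDensity_eq_integral_smul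
      (hγ.continuous_deriv le_rfl).nnnorm.measurable]
  rfl

end ArcLength

namespace IsLevelChart

variable {K : Set E2} {ω : E2 → ℝ} {a b P δ : ℝ} {Γ : ℝ × ℝ → E2} {y : ℝ}

lemma Icc_subset (h : IsLevelChart K ω a b P δ Γ) : Icc a b ⊆ Ioo (a - δ) (b + δ) := by
  have := h.margin_pos
  exact Icc_subset_Ioo (by linarith) (by linarith)

lemma level_eq_image (h : IsLevelChart K ω a b P δ Γ) (hy : y ∈ Icc a b) :
    {x ∈ K | ω x = y} = (fun t => Γ (t, y)) '' Ico 0 P := by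
  ext x
  constructor
  · rintro ⟨hx, rfl⟩
    exact h.exists_chart_eq x hx
  · rintro ⟨t, -, rfl⟩
    exact ⟨h.chart_mem t y hy, h.apply_chart t y (h.Icc_subset hy)⟩

lemma hasDerivAt_chart (h : IsLevelChart K ω a b P δ Γ) (t : ℝ) (hy : y ∈ Ioo (a - δ) (b + δ)) :
    HasDerivAt (fun t => Γ (t, y)) (levelSpeed ω Γ (t, y) • hamiltonianField ω (Γ (t, y))) t := by
  have hΓ := h.contDiff_chart.differentiable (by simp) (t, y)
  rw [← fderiv_eq_levelSpeed_smul (h.contDiff.differentiable (by simp) _) hΓ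
    (fun s => h.apply_chart s y hy) (h.gradient_chart_ne_zero t y hy)]
  exact hasDerivAt_prodMk_left hΓ

lemma hasDerivAt_comp_chart (h : IsLevelChart K ω a b P δ Γ) {α : E2 → ℝ} (hα : Differentiable ℝ α)
    (t : ℝ) (hy : y ∈ Ioo (a - δ) (b + δ)) :
    HasDerivAt (fun t => α (Γ (t, y))) (levelSpeed ω Γ (t, y) * pb ω α (Γ (t, y))) t := by
  have hcomp := (hα _).hasFDerivAt.comp_hasDerivAt t (h.hasDerivAt_chart t hy)
  rwa [map_smul, fderiv_hamiltonianField] at hcomp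

lemma continuous_levelSpeed (h : IsLevelChart K ω a b P δ Γ) (hy : y ∈ Ioo (a - δ) (b + δ)) :
    Continuous fun t => levelSpeed ω Γ (t, y) :=
  continuous_iff_continuousAt.2 fun t =>
    ContinuousAt.comp (f := fun t => (t, y)) (contDiffAt_levelSpeed h.contDiff h.contDiff_chart
      (h.gradient_chart_ne_zero t y hy)).continuousAt (Continuous.prodMk_left y).continuousAt

/- Arc length along the level is `‖∂Γ/∂t‖ dt = levelSpeed * ‖gradient ω‖ dt`. -/
lemma setIntegral_level_div_norm_gradient (h : IsLevelChart K ω a b P δ Γ) {f : E2 → ℝ}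
    (hf : Measurable f) (hy : y ∈ Icc a b) :
    ∫ x in {x ∈ K | ω x = y}, f x / ‖gradient ω x‖ ∂μH[1] =
      ∫ t in 0..P, levelSpeed ω Γ (t, y) * f (Γ (t, y)) := by
  have hy' := h.Icc_subset hy
  have hlevel : ContDiff ℝ 1 fun t => Γ (t, y) :=
    (h.contDiff_chart.comp (contDiff_prodMk_left y)).of_le (by simp)
  have hquot : Measurable fun x => f x / ‖gradient ω x‖ :=
    hf.div (contDiff_gradient h.contDiff).continuous.norm.measurable
  rw [h.level_eq_image hy, setIntegral_image_hausdorffMeasure hlevel measurableSet_Ico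
    (h.injOn_chart y) hquot.stronglyMeasurable, intervalIntegral.integral_of_le h.period_pos.le,
    ← integral_Ico_eq_integral_Ioc]
  refine setIntegral_congr_fun measurableSet_Ico fun t _ => ?_
  have hne : ‖gradient ω (Γ (t, y))‖ ≠ 0 := by simpa using h.gradient_chart_ne_zero t y hy'
  simp only [(h.hasDerivAt_chart t hy').deriv, norm_smul, norm_hamiltonianField, smul_eq_mul,
    Real.norm_of_nonneg (h.levelSpeed_pos t y hy').le]
  field_simp

lemma intervalIntegral_levelSpeed_mul_pb (h : IsLevelChart K ω a b P δ Γ) {α : E2 → ℝ}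
    (hα : ContDiff ℝ ∞ α) (hy : y ∈ Ioo (a - δ) (b + δ)) :
    ∫ t in 0..P, levelSpeed ω Γ (t, y) * pb ω α (Γ (t, y)) = 0 := by
  have hcont := (h.continuous_levelSpeed hy).mul
    ((contDiff_pb h.contDiff hα).continuous.comp
      (h.contDiff_chart.continuous.comp (Continuous.prodMk_left y)))
  rw [intervalIntegral.integral_eq_sub_of_hasDerivAt
    (fun t _ => h.hasDerivAt_comp_chart (hα.differentiable (by simp)) t hy)
    (hcont.intervalIntegrable _ _), ← zero_add P, h.chart_add_period, sub_self]

end IsLevelChart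

/-! ### Functions in level coordinates -/

section PeriodicPrimitive

variable {E : Type} [NormedAddCommGroup E] [NormedSpace ℝ E] {B : ℝ × E → ℝ} {P : ℝ}

lemma contDiff_intervalIntegral_right (hB : ContDiff ℝ ∞ B) :
    ContDiff ℝ ∞ fun p : ℝ × E => ∫ r in 0..p.1, B (r, p.2) := by
  have hscale : ∀ p : ℝ × E, ∫ r in 0..p.1, B (r, p.2) = p.1 * ∫ r in 0..1, B (p.1 * r, p.2) :=
    fun p => by
      have := intervalIntegral.mul_integral_comp_mul_left (a := 0) (b := 1)
        (f := fun r => B (r, p.2)) p.1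
      rw [this, mul_zero, mul_one]
  simp only [hscale]
  exact contDiff_fst.mul (contDiff_intervalIntegral
    (f := fun q : ℝ × ℝ × E => B (q.2.1 * q.1, q.2.2)) (hB.comp (by fun_prop)))

theorem exists_periodic_primitive (hP : P ≠ 0) (hB : ContDiff ℝ ∞ B)
    (hper : ∀ y, Function.Periodic (fun t => B (t, y)) P) :
    ∃ A : ℝ × E → ℝ, ContDiff ℝ ∞ A ∧ (∀ y, Function.Periodic (fun t => A (t, y)) P) ∧
      ∀ y, ∫ r in 0..P, B (r, y) = 0 → ∀ t, HasDerivAt (fun t => A (t, y)) (B (t, y)) t := by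
  have hI := contDiff_intervalIntegral_right hB
  have hcont : ∀ y, Continuous fun t => B (t, y) := fun y =>
    hB.continuous.comp (Continuous.prodMk_left y)
  refine ⟨fun p => (∫ r in 0..p.1, B (r, p.2)) - p.1 / P * ∫ r in 0..P, B (r, p.2),
    hI.sub ((contDiff_fst.div_const P).mul (hI.comp (contDiff_const.prodMk contDiff_snd))),
    fun y t => ?_, fun y hy t => ?_⟩
  · have hadd := intervalIntegral.integral_add_adjacent_intervals (μ := volume)
      ((hcont y).intervalIntegrable 0 t) ((hcont y).intervalIntegrable t (t + P))
    rw [(hper y).intervalIntegral_add_eq t 0, zero_add] at hadd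
    simp only [← hadd]
    field_simp
    ring
  · simp only [hy, mul_zero, sub_zero]
    exact intervalIntegral.integral_hasDerivAt_right ((hcont y).intervalIntegrable _ _)
      ((hcont y).stronglyMeasurableAtFilter _ _) (hcont y).continuousAt

end PeriodicPrimitive

/-- The plane as a product of its two coordinates; it serves to take determinants of derivatives of
charts. -/
def planeCoords : E2 ≃L[ℝ] ℝ × ℝ :=
  (EuclideanSpace.equiv (Fin 2) ℝ).trans (ContinuousLinearEquiv.finTwoArrow ℝ ℝ)

lemma planeCoords_apply (x : E2) : planeCoords x = (x 0, x 1) := rfl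

lemma det_prod_eq (f : ℝ × ℝ →L[ℝ] ℝ × ℝ) :
    f.det = (f (1, 0)).1 * (f (0, 1)).2 - (f (0, 1)).1 * (f (1, 0)).2 := by
  rw [ContinuousLinearMap.det, ← LinearMap.det_toMatrix (Module.Basis.finTwoProd ℝ),
    Matrix.det_fin_two]
  simp [LinearMap.toMatrix_apply]

namespace IsLevelChart

variable {K : Set E2} {ω : E2 → ℝ} {a b P δ : ℝ} {Γ : ℝ × ℝ → E2} {t y : ℝ}

lemma fderiv_apply_fderiv_chart_snd (h : IsLevelChart K ω a b P δ Γ)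
    (hy : y ∈ Ioo (a - δ) (b + δ)) : fderiv ℝ ω (Γ (t, y)) (fderiv ℝ Γ (t, y) (0, 1)) = 1 := by
  have hcomp := (h.contDiff.differentiable (by simp) _).hasFDerivAt.comp_hasDerivAt y
    (hasDerivAt_prodMk_right (p := (t, y)) (h.contDiff_chart.differentiable (by simp) _))
  refine hcomp.unique ((hasDerivAt_id y).congr_of_eventuallyEq ?_)
  filter_upwards [isOpen_Ioo.mem_nhds hy] with z hz using h.apply_chart t z hz

lemma det_fderiv_chart (h : IsLevelChart K ω a b P δ Γ) (hy : y ∈ Ioo (a - δ) (b + δ)) :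
    (planeCoords.toContinuousLinearMap ∘L fderiv ℝ Γ (t, y)).det = -levelSpeed ω Γ (t, y) := by
  have hfst : fderiv ℝ Γ (t, y) (1, 0) = levelSpeed ω Γ (t, y) • hamiltonianField ω (Γ (t, y)) :=
    fderiv_eq_levelSpeed_smul (h.contDiff.differentiable (by simp) _)
      (h.contDiff_chart.differentiable (by simp) _) (fun s => h.apply_chart s y hy)
      (h.gradient_chart_ne_zero t y hy)
  have hsnd := h.fderiv_apply_fderiv_chart_snd (t := t) hy
  rw [fderiv_apply_eq_pd] at hsnd
  simp only [det_prod_eq, ContinuousLinearMap.comp_apply, ContinuousLinearEquiv.coe_coe,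
    planeCoords_apply, hfst, hamiltonianField, PiLp.smul_apply, smul_eq_mul, Matrix.cons_val_zero,
    Matrix.cons_val_one]
  linear_combination -levelSpeed ω Γ (t, y) * hsnd

lemma exists_local_inverse (h : IsLevelChart K ω a b P δ Γ) (t : ℝ)
    (hy : y ∈ Ioo (a - δ) (b + δ)) :
    ∃ g : E2 → ℝ × ℝ, ContDiffAt ℝ ∞ g (Γ (t, y)) ∧ g (Γ (t, y)) = (t, y) ∧
      ∀ᶠ x in 𝓝 (Γ (t, y)), Γ (g x) = x := by
  have hdet : (planeCoords.toContinuousLinearMap ∘L fderiv ℝ Γ (t, y)).det ≠ 0 := by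
    simpa [h.det_fderiv_chart hy] using (h.levelSpeed_pos t y hy).ne'
  let e := (ContinuousLinearMap.toContinuousLinearEquivOfDetNeZero _ hdet).trans planeCoords.symm
  have he : HasFDerivAt Γ (e : ℝ × ℝ →L[ℝ] E2) (t, y) := by
    have heq : (e : ℝ × ℝ →L[ℝ] E2) = fderiv ℝ Γ (t, y) :=
      ContinuousLinearMap.ext fun v => planeCoords.symm_apply_apply _
    exact heq ▸ (h.contDiff_chart.differentiable (by simp) (t, y)).hasFDerivAt
  have hΓ : ContDiffAt ℝ ∞ Γ (t, y) := h.contDiff_chart.contDiffAt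
  exact ⟨hΓ.localInverse he (by simp), hΓ.to_localInverse he (by simp),
    hΓ.localInverse_apply_image he (by simp),
    (hΓ.hasStrictFDerivAt' he (by simp)).eventually_right_inverse⟩

lemma apply_eq_of_chart_eq (h : IsLevelChart K ω a b P δ Γ) {A : ℝ × ℝ → ℝ} {p q : ℝ × ℝ}
    (hA : ∀ y, Function.Periodic (fun t => A (t, y)) P) (hp : p.2 ∈ Ioo (a - δ) (b + δ))
    (hq : q.2 ∈ Ioo (a - δ) (b + δ)) (hpq : Γ p = Γ q) : A p = A q := by
  obtain ⟨s, y⟩ := p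
  obtain ⟨t, z⟩ := q
  obtain rfl : y = z := by rw [← h.apply_chart s y hp, hpq, h.apply_chart t z hq]
  have hΓ : Function.Periodic (fun t => Γ (t, y)) P := fun t => h.chart_add_period t y
  obtain ⟨s', hs', hs⟩ := Function.Periodic.exists_mem_Ico₀ (f := fun t => (A (t, y), Γ (t, y)))
    (fun t => Prod.ext (hA y t) (hΓ t)) h.period_pos s
  obtain ⟨t', ht', ht⟩ := Function.Periodic.exists_mem_Ico₀ (f := fun t => (A (t, y), Γ (t, y)))
    (fun t => Prod.ext (hA y t) (hΓ t)) h.period_pos t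
  simp only [Prod.mk.injEq] at hs ht
  have hst : s' = t' := h.injOn_chart y hs' ht' (hs.2.symm.trans (hpq.trans ht.2))
  rw [hs.1, ht.1, hst]

theorem exists_contDiff_eq_of_periodic (h : IsLevelChart K ω a b P δ Γ) {A : ℝ × ℝ → ℝ}
    (hA : ContDiff ℝ ∞ A) (hper : ∀ y, Function.Periodic (fun t => A (t, y)) P) :
    ∃ α : E2 → ℝ, ContDiff ℝ ∞ α ∧ ∀ t, ∀ y ∈ Icc a b, α (Γ (t, y)) = A (t, y) := by
  let S : Set (ℝ × ℝ) := {p | p.2 ∈ Ioo (a - δ) (b + δ)}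
  have hS : IsOpen S := isOpen_Ioo.preimage continuous_snd
  let α₀ : E2 → ℝ := A ∘ Function.invFunOn Γ S
  have hα₀ : ∀ p ∈ S, α₀ (Γ p) = A p := fun p hp =>
    have hex : ∃ q ∈ S, Γ q = Γ p := ⟨p, hp, rfl⟩
    h.apply_eq_of_chart_eq hper (Function.invFunOn_mem hex) hp (Function.invFunOn_eq hex)
  have hlocal : ∀ p ∈ S, Γ '' S ∈ 𝓝 (Γ p) ∧ ContDiffAt ℝ ∞ α₀ (Γ p) := fun p hp => by
    obtain ⟨g, hg, hgp, hΓg⟩ := h.exists_local_inverse p.1 hp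
    have hgS : ∀ᶠ x in 𝓝 (Γ p), g x ∈ S := hg.continuousAt (by simpa [hgp] using hS.mem_nhds hp)
    refine ⟨?_, (hA.contDiffAt.comp _ hg).congr_of_eventuallyEq ?_⟩
    · filter_upwards [hgS, hΓg] with x hxS hx using ⟨g x, hxS, hx⟩
    · filter_upwards [hgS, hΓg] with x hxS hx
      rw [← hx, hα₀ _ hxS, Function.comp_apply, hx]
  have hopen : IsOpen (Γ '' S) :=
    isOpen_iff_mem_nhds.2 (forall_mem_image.2 fun p hp => (hlocal p hp).1)
  have hK : K ⊆ Γ '' S := fun x hx => by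
    obtain ⟨t, -, hxt⟩ := h.exists_chart_eq x hx
    exact ⟨(t, ω x), h.Icc_subset (h.image_eq ▸ mem_image_of_mem ω hx), hxt⟩
  obtain ⟨β, hβ, -, hβS, hβK⟩ := exists_contDiff_cutoff h.isCompact hopen hK
  refine ⟨fun x => β x • α₀ x, contDiff_smul_of_tsupport_subset hβ hβS
    (forall_mem_image.2 fun p hp => (hlocal p hp).2), fun t y hy => ?_⟩
  simp only [hβK.self_of_nhdsSet _ (h.chart_mem t y hy), one_smul, hα₀ (t, y) (h.Icc_subset hy)]

lemma exists_contDiff_eq_levelSpeed (h : IsLevelChart K ω a b P δ Γ) :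
    ∃ q : ℝ × ℝ → ℝ, ContDiff ℝ ∞ q ∧ (∀ y, Function.Periodic (fun t => q (t, y)) P) ∧
      ∀ t, ∀ y ∈ Icc a b, q (t, y) = levelSpeed ω Γ (t, y) := by
  obtain ⟨χ, hχ, -, hχU, hχ1⟩ := exists_contDiff_cutoff isCompact_Icc isOpen_Ioo h.Icc_subset
  refine ⟨fun p => χ p.2 • levelSpeed ω Γ p, ?_, fun y t => ?_, fun t y hy => ?_⟩
  · exact contDiff_smul_of_tsupport_subset (hχ.comp contDiff_snd)
      ((tsupport_comp_subset_preimage χ continuous_snd).trans (preimage_mono hχU)) fun p hp =>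
        contDiffAt_levelSpeed h.contDiff h.contDiff_chart (h.gradient_chart_ne_zero p.1 p.2 hp)
  · simp only [levelSpeed_add_period h.chart_add_period]
  · simp only [hχ1.self_of_nhdsSet y hy, one_smul]

theorem exists_pb_eq (h : IsLevelChart K ω a b P δ Γ) {ν : E2 → ℝ} (hν : ContDiff ℝ ∞ ν)
    (hint : ∀ y ∈ Icc a b, ∫ t in 0..P, levelSpeed ω Γ (t, y) * ν (Γ (t, y)) = 0) :
    ∃ α : E2 → ℝ, ContDiff ℝ ∞ α ∧ ∀ x ∈ K, ν x = pb ω α x := by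
  obtain ⟨q, hq, hqP, hqΓ⟩ := h.exists_contDiff_eq_levelSpeed
  obtain ⟨A, hA, hAP, hA'⟩ := exists_periodic_primitive h.period_pos.ne'
    (hq.mul (hν.comp h.contDiff_chart)) fun y t => by
      simp only [Function.comp_apply, h.chart_add_period, hqP y t]
  obtain ⟨α, hα, hαA⟩ := h.exists_contDiff_eq_of_periodic hA hAP
  refine ⟨α, hα, fun x hx => ?_⟩
  obtain ⟨t, -, hxt⟩ := h.exists_chart_eq x hx
  have hy : ω x ∈ Icc a b := h.image_eq ▸ mem_image_of_mem ω hx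
  have hy' := h.Icc_subset hy
  have hderiv := hA' (ω x) (by simpa only [Function.comp_apply, hqΓ _ _ hy] using hint _ hy) t
  simp only [← hαA _ _ hy, Function.comp_apply, hqΓ _ _ hy] at hderiv
  have hν_eq := hderiv.unique (h.hasDerivAt_comp_chart (hα.differentiable (by simp)) t hy')
  rwa [mul_right_inj' (h.levelSpeed_pos t _ hy').ne', hxt] at hν_eq

end IsLevelChart

lemma subsingleton_of_isPreconnected_of_volume_eq_zero {s : Set ℝ} (hs : IsPreconnected s)
    (h : volume s = 0) : s.Subsingleton := by
  refine fun u hu v hv => by_contra fun huv => ?_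
  have hpos : 0 < volume (uIcc u v) := by simpa [uIcc, sub_eq_zero] using Ne.symm huv
  exact hpos.ne' (measure_mono_null (hs.ordConnected.uIcc_subset hu hv) h)

/- A one-dimensional Sard argument: `α ∘ Γ` has derivative zero at the parameters of `C`, so
`α '' C` is a null interval. -/
theorem IsLevelChart.eq_of_isPreconnected {K C : Set E2} {ω α : E2 → ℝ} {a b P δ y : ℝ}
    {Γ : ℝ × ℝ → E2} (h : IsLevelChart K ω a b P δ Γ) (hα : ContDiff ℝ ∞ α)
    (hC : IsPreconnected C) (hCK : C ⊆ {x ∈ K | ω x = y}) (hpb : ∀ x ∈ C, pb ω α x = 0) {x z : E2}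
    (hx : x ∈ C) (hz : z ∈ C) : α x = α z := by
  obtain ⟨hxK, rfl⟩ := hCK hx
  have hy := h.Icc_subset (h.image_eq ▸ mem_image_of_mem ω hxK)
  have hderiv : ∀ t ∈ {t | Γ (t, ω x) ∈ C}, HasFDerivWithinAt (fun t => α (Γ (t, ω x))) 0
      {t | Γ (t, ω x) ∈ C} t := fun t ht => by
    have := (h.hasDerivAt_comp_chart (hα.differentiable (by simp)) t hy).hasFDerivAt
    simpa [hpb _ ht] using this.hasFDerivWithinAt
  have hnull : volume ((fun t => α (Γ (t, ω x))) '' {t | Γ (t, ω x) ∈ C}) = 0 :=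
    addHaar_image_eq_zero_of_det_fderivWithin_eq_zero volume hderiv (by simp)
  refine subsingleton_of_isPreconnected_of_volume_eq_zero (hC.image α hα.continuous.continuousOn)
    (measure_mono_null ?_ hnull) (mem_image_of_mem α hx) (mem_image_of_mem α hz)
  rintro _ ⟨w, hw, rfl⟩
  obtain ⟨hwK, hwx⟩ := hCK hw
  obtain ⟨t, -, hwt⟩ := h.exists_chart_eq w hwK
  rw [hwx] at hwt
  exact ⟨t, by rwa [mem_ofPred_eq, hwt], by simp only [hwt]⟩

/-! ### Perturbed sublevel sets -/

section SublevelIntegrals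

variable {g : ℝ → ℝ} {Q : ℝ}

lemma norm_setIntegral_sub_setIntegral_Iio_le (hg : Integrable g) (hgQ : ∀ y, |g y| ≤ Q)
    {s : Set ℝ} (hs : MeasurableSet s) {m r : ℝ} (hr : 0 ≤ r)
    (hsm : ∀ y, g y ≠ 0 → r < |y - m| → (y ∈ s ↔ y < m)) :
    ‖(∫ y in s, g y) - ∫ y in Iio m, g y‖ ≤ Q * (2 * r) := by
  rw [← integral_indicator hs, ← integral_indicator measurableSet_Iio,
    ← integral_sub (hg.indicator hs) (hg.indicator measurableSet_Iio)]
  have hbound : ∀ y, ‖s.indicator g y - (Iio m).indicator g y‖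
      ≤ (Icc (m - r) (m + r)).indicator (fun _ => Q) y := by
    intro y
    have hQ : 0 ≤ Q := (abs_nonneg _).trans (hgQ y)
    by_cases hy : |y - m| ≤ r
    · have hyI : y ∈ Icc (m - r) (m + r) := by
        rwa [← Real.closedBall_eq_Icc, mem_closedBall_iff_norm]
      rw [indicator_of_mem hyI]
      by_cases hys : y ∈ s <;> by_cases hym : y ∈ Iio m <;> simp [hys, hym, hgQ y, hQ]
    · refine (norm_eq_zero.2 ?_).trans_le (indicator_nonneg (fun _ _ => hQ) y)
      by_cases hgy : g y = 0
      · simp [indicator, hgy]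
      · simp [indicator, hsm y hgy (not_le.1 hy)]
  refine (norm_integral_le_of_norm_le ?_ (.of_forall hbound)).trans_eq ?_
  · exact (integrable_indicator_iff measurableSet_Icc).2 (integrableOn_const (by simp))
  · rw [integral_indicator measurableSet_Icc, setIntegral_const, Real.volume_real_Icc_of_le
      (by linarith), smul_eq_mul]
    ring

lemma hasDerivAt_setIntegral_Iio (hg : Integrable g) {lam : ℝ} (hlam : ContinuousAt g lam) :
    HasDerivAt (fun m => ∫ y in Iio m, g y) (g lam) lam := by
  have hFTC : HasDerivAt (fun m => ∫ y in lam..m, g y) (g lam) lam :=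
    intervalIntegral.integral_hasDerivAt_right hg.intervalIntegrable
      hg.aestronglyMeasurable.stronglyMeasurableAtFilter hlam
  refine (hFTC.const_add (∫ y in Iio lam, g y)).congr_of_eventuallyEq (.of_forall fun m => ?_)
  simp only [← integral_Iic_eq_integral_Iio,
    ← intervalIntegral.integral_Iic_sub_Iic hg.integrableOn hg.integrableOn, add_sub_cancel]

lemma hasDerivAt_setIntegral (hg : Integrable g) (hgQ : ∀ y, |g y| ≤ Q) {s : ℝ → Set ℝ}
    (hs : ∀ ε, MeasurableSet (s ε)) {lam n : ℝ} (hlam : n = 0 ∨ ContinuousAt g lam)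
    (hsn : ∀ η > 0, ∀ᶠ ε in 𝓝 (0 : ℝ), ∀ y, g y ≠ 0 → η * |ε| < |y - (lam - ε * n)| →
      (y ∈ s ε ↔ y < lam - ε * n)) :
    HasDerivAt (fun ε => ∫ y in s ε, g y) (-(g lam * n)) 0 := by
  set G : ℝ → ℝ := fun m => ∫ y in Iio m, g y
  have hG : HasDerivAt (fun ε => G (lam - ε * n)) (-(g lam * n)) 0 := by
    rcases hlam with rfl | hlam
    · simpa using hasDerivAt_const (0 : ℝ) (G lam)
    · have hm : HasDerivAt (fun ε => lam - ε * n) (-n) 0 := by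
        simpa using ((hasDerivAt_id (0 : ℝ)).mul_const n).const_sub lam
      rw [← mul_neg]
      exact HasDerivAt.comp 0 (by simpa using hasDerivAt_setIntegral_Iio hg hlam) hm
  have hbound : ∀ η > 0, ∀ᶠ ε in 𝓝 (0 : ℝ),
      ‖(∫ y in s ε, g y) - G (lam - ε * n)‖ ≤ Q * (2 * (η * |ε|)) := fun η hη => by
    filter_upwards [hsn η hη] with ε hε
    exact norm_setIntegral_sub_setIntegral_Iio_le hg hgQ (hs ε) (by positivity) hε
  have hzero : (∫ y in s 0, g y) - G (lam - 0 * n) = 0 := by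
    simpa using (hbound 1 one_pos).self_of_nhds
  have hdiff : HasDerivAt (fun ε => (∫ y in s ε, g y) - G (lam - ε * n)) 0 0 := by
    have hQ : 0 ≤ Q := (abs_nonneg _).trans (hgQ 0)
    refine hasDerivAt_iff_isLittleO.2 (Asymptotics.isLittleO_iff.2 fun θ hθ => ?_)
    filter_upwards [hbound (θ / (2 * Q + 1)) (by positivity)] with ε hε
    rw [hzero, smul_zero, sub_zero, sub_zero, sub_zero, Real.norm_eq_abs ε]
    calc _ ≤ Q * (2 * (θ / (2 * Q + 1) * |ε|)) := hε
      _ = 2 * Q / (2 * Q + 1) * (θ * |ε|) := by ring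
      _ ≤ θ * |ε| := mul_le_of_le_one_left (by positivity)
        ((div_le_one (by positivity)).2 (by linarith))
  simpa only [zero_add, sub_add_cancel] using hdiff.fun_add hG

lemma eventually_lt_iff_lt_sub_mul {w : ℝ → ℝ → ℝ} {S : Set ℝ} {lam C n : ℝ}
    (hC : ∀ ε, |ε| ≤ 1 → ∀ y ∈ S, |w ε y - y| ≤ C * |ε|)
    (hn : ∀ η > 0, ∀ᶠ p : ℝ × ℝ in 𝓝 (0, lam), |w p.1 p.2 - p.2 - p.1 * n| ≤ η * |p.1|)
    {η : ℝ} (hη : 0 < η) :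
    ∀ᶠ ε in 𝓝 (0 : ℝ), ∀ y ∈ S, η * |ε| < |y - (lam - ε * n)| →
      (w ε y < lam ↔ y < lam - ε * n) := by
  obtain ⟨ρ, hρ, hnear⟩ := Metric.eventually_nhds_iff.1 (hn η hη)
  have hsmall : ∀ᶠ ε in 𝓝 (0 : ℝ), |ε| ≤ 1 ∧ |ε| < ρ ∧ C * |ε| + |ε * n| < ρ := by
    have hcont : Continuous fun ε : ℝ => C * |ε| + |ε * n| := by fun_prop
    have habs : Tendsto (fun ε : ℝ => |ε|) (𝓝 0) (𝓝 0) := by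
      simpa using continuous_abs.tendsto (0 : ℝ)
    exact (habs.eventually_le_const one_pos).and ((habs.eventually_lt_const hρ).and
      ((hcont.tendsto 0).eventually_lt_const (by simpa using hρ)))
  filter_upwards [hsmall] with ε ⟨hε1, hερ, hfar⟩ y hy hsep
  by_cases hyρ : |y - lam| < ρ
  · have hy' := hnear (y := (ε, y))
      (max_lt (by simpa using hερ) (by simpa [Real.dist_eq] using hyρ))
    simp only at hy'
    grind
  · have hy' := hC ε hε1 y hy
    grind

end SublevelIntegrals

/-! ### Area in level coordinates -/

lemma measurePreserving_planeCoords : MeasurePreserving planeCoords :=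
  (volume_preserving_finTwoArrow ℝ).comp (PiLp.volume_preserving_ofLp (Fin 2))

/-- The density in the chart `Γ` of the area of `R`: the Jacobian of `Γ` on the part of the strip
`a ≤ y ≤ b` that `Γ` maps into `R`, and zero elsewhere. -/
def areaDensity (R : Set E2) (ω : E2 → ℝ) (a b : ℝ) (Γ : ℝ × ℝ → E2) : ℝ × ℝ → ℝ :=
  (Γ ⁻¹' R ∩ Prod.snd ⁻¹' Icc a b).indicator (levelSpeed ω Γ)

namespace IsLevelChart

variable {K R : Set E2} {ω : E2 → ℝ} {a b P δ : ℝ} {Γ : ℝ × ℝ → E2} {t y : ℝ}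

lemma volume_eq_setLIntegral (h : IsLevelChart K ω a b P δ Γ) (hR : MeasurableSet R)
    (hRK : R ⊆ K) :
    volume R = ∫⁻ p in (Ico 0 P ×ˢ Icc a b) ∩ Γ ⁻¹' R, ENNReal.ofReal (levelSpeed ω Γ p) := by
  set A := (Ico 0 P ×ˢ Icc a b) ∩ Γ ⁻¹' R
  have hA : MeasurableSet A := (measurableSet_Ico.prod measurableSet_Icc).inter
    (h.contDiff_chart.continuous.measurable hR)
  have hΓA : Γ '' A = R := by
    refine Subset.antisymm (image_subset_iff.2 inter_subset_right) fun x hx => ?_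
    obtain ⟨t, ht, htx⟩ := h.exists_chart_eq x (hRK hx)
    have hωx : ω x ∈ Icc a b := h.image_eq ▸ mem_image_of_mem ω (hRK hx)
    exact ⟨(t, ω x), ⟨⟨ht, hωx⟩, by rwa [mem_preimage, htx]⟩, htx⟩
  have hinj : InjOn Γ A := by
    rintro ⟨t, y⟩ ⟨⟨ht, hy⟩, -⟩ ⟨s, z⟩ ⟨⟨hs, hz⟩, -⟩ hts
    obtain rfl : y = z := by
      rw [← h.apply_chart t y (h.Icc_subset hy), hts, h.apply_chart s z (h.Icc_subset hz)]
    exact Prod.ext (h.injOn_chart y ht hs hts) rfl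
  have hderiv : ∀ p ∈ A, HasFDerivWithinAt (planeCoords ∘ Γ)
      (planeCoords.toContinuousLinearMap ∘L fderiv ℝ Γ p) A p := fun p _ =>
    (planeCoords.toContinuousLinearMap.hasFDerivAt.comp p
      (h.contDiff_chart.differentiable (by simp) p).hasFDerivAt).hasFDerivWithinAt
  calc volume R = volume (planeCoords '' R) := by
        rw [← measurePreserving_planeCoords.measure_preimage_emb
          planeCoords.toHomeomorph.measurableEmbedding,
          preimage_image_eq _ planeCoords.injective]
    _ = volume ((planeCoords ∘ Γ) '' A) := by rw [image_comp, hΓA]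
    _ = ∫⁻ p in A, ENNReal.ofReal (levelSpeed ω Γ p) := by
        rw [← lintegral_abs_det_fderiv_eq_addHaar_image volume hA hderiv
          (planeCoords.injective.comp_injOn hinj)]
        refine setLIntegral_congr_fun hA fun p hp => ?_
        have hp' := h.Icc_subset hp.1.2
        simp only [h.det_fderiv_chart hp', abs_neg, abs_of_pos (h.levelSpeed_pos p.1 p.2 hp')]

lemma areaDensity_nonneg (h : IsLevelChart K ω a b P δ Γ) (p : ℝ × ℝ) :
    0 ≤ areaDensity R ω a b Γ p :=
  indicator_nonneg (fun p hp => (h.levelSpeed_pos p.1 p.2 (h.Icc_subset hp.2)).le) p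

lemma exists_abs_areaDensity_le (h : IsLevelChart K ω a b P δ Γ) :
    ∃ Q, ∀ p, |areaDensity R ω a b Γ p| ≤ Q := by
  have hcont : ContinuousOn (levelSpeed ω Γ) (Icc 0 P ×ˢ Icc a b) := fun p hp =>
    (contDiffAt_levelSpeed h.contDiff h.contDiff_chart
      (h.gradient_chart_ne_zero p.1 p.2 (h.Icc_subset hp.2))).continuousAt.continuousWithinAt
  obtain ⟨Q, hQ⟩ := (isCompact_Icc.prod isCompact_Icc).exists_bound_of_continuousOn hcont
  refine ⟨max Q 0, fun p => ?_⟩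
  by_cases hp : p ∈ Γ ⁻¹' R ∩ Prod.snd ⁻¹' Icc a b
  · obtain ⟨t, ht, hpt⟩ := Function.Periodic.exists_mem_Ico₀
      (f := fun t => levelSpeed ω Γ (t, p.2))
      (fun t => levelSpeed_add_period h.chart_add_period t p.2) h.period_pos p.1
    rw [areaDensity, indicator_of_mem hp, show levelSpeed ω Γ p = _ from hpt]
    exact (hQ (t, p.2) ⟨Ico_subset_Icc_self ht, hp.2⟩).trans (le_max_left _ _)
  · rw [areaDensity, indicator_of_notMem hp, abs_zero]
    exact le_max_right _ _

lemma measurable_areaDensity (h : IsLevelChart K ω a b P δ Γ) (hR : MeasurableSet R) :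
    Measurable (areaDensity R ω a b Γ) := by
  obtain ⟨q, hq, -, hqΓ⟩ := h.exists_contDiff_eq_levelSpeed
  rw [areaDensity, indicator_congr fun p hp => (hqΓ p.1 p.2 hp.2).symm]
  exact hq.continuous.measurable.indicator
    ((h.contDiff_chart.continuous.measurable hR).inter (measurable_snd measurableSet_Icc))

lemma integrable_areaDensity (h : IsLevelChart K ω a b P δ Γ) (hR : MeasurableSet R) (t : ℝ) :
    Integrable fun y => areaDensity R ω a b Γ (t, y) := by
  obtain ⟨Q, hQ⟩ := h.exists_abs_areaDensity_le (R := R)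
  have hsupp : Function.support (fun y => areaDensity R ω a b Γ (t, y)) ⊆ Icc a b := fun y hy =>
    (mem_of_indicator_ne_zero hy).2
  rw [← integrableOn_iff_integrable_of_support_subset hsupp]
  exact Measure.integrableOn_of_bounded (by simp)
    ((h.measurable_areaDensity hR).comp measurable_prodMk_left).aestronglyMeasurable
    (.of_forall fun y => hQ (t, y))

lemma integrableOn_areaDensity (h : IsLevelChart K ω a b P δ Γ) (hR : MeasurableSet R) :
    IntegrableOn (areaDensity R ω a b Γ) (Ico 0 P ×ˢ univ) := by
  obtain ⟨Q, hQ⟩ := h.exists_abs_areaDensity_le (R := R)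
  refine IntegrableOn.of_forall_sdiff_eq_zero (s := Ico 0 P ×ˢ Icc a b) ?_
    (measurableSet_Ico.prod MeasurableSet.univ) fun p hp => ?_
  · refine Measure.integrableOn_of_bounded ?_ (h.measurable_areaDensity hR).aestronglyMeasurable
      (.of_forall hQ)
    exact ((Metric.isBounded_Ico 0 P).prod (Metric.isBounded_Icc a b)).measure_lt_top.ne
  · exact indicator_of_notMem (fun hp' => hp.2 ⟨hp.1.1, hp'.2⟩) _

lemma volume_inter_eq_intervalIntegral (h : IsLevelChart K ω a b P δ Γ) (hR : MeasurableSet R)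
    (hRK : R ⊆ K) {S : Set E2} (hS : MeasurableSet S) :
    (volume (R ∩ S)).toReal =
      ∫ t in 0..P, ∫ y in {y | Γ (t, y) ∈ S}, areaDensity R ω a b Γ (t, y) := by
  have hΓS : MeasurableSet (Γ ⁻¹' S) := h.contDiff_chart.continuous.measurable hS
  have hB : MeasurableSet (Γ ⁻¹' R ∩ Prod.snd ⁻¹' Icc a b) :=
    (h.contDiff_chart.continuous.measurable hR).inter (measurable_snd measurableSet_Icc)
  have hlint : volume (R ∩ S) = ∫⁻ p in (Ico 0 P ×ˢ univ) ∩ Γ ⁻¹' S,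
      ENNReal.ofReal (areaDensity R ω a b Γ p) := by
    have hset : (Ico 0 P ×ˢ Icc a b) ∩ Γ ⁻¹' (R ∩ S) =
        (Γ ⁻¹' R ∩ Prod.snd ⁻¹' Icc a b) ∩ ((Ico 0 P ×ˢ univ) ∩ Γ ⁻¹' S) := by grind
    rw [h.volume_eq_setLIntegral (hR.inter hS) (inter_subset_left.trans hRK), hset,
      ← setLIntegral_indicator hB]
    exact congrArg (lintegral _) (indicator_comp_of_zero ENNReal.ofReal_zero)
  calc (volume (R ∩ S)).toReal = ∫ p in (Ico 0 P ×ˢ univ) ∩ Γ ⁻¹' S, areaDensity R ω a b Γ p := by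
        rw [hlint, integral_eq_lintegral_of_nonneg_ae (.of_forall h.areaDensity_nonneg)
          (h.measurable_areaDensity hR).aestronglyMeasurable]
    _ = ∫ t in Ico 0 P, ∫ y, (Γ ⁻¹' S).indicator (areaDensity R ω a b Γ) (t, y) := by
        rw [← setIntegral_indicator hΓS, Measure.volume_eq_prod,
          setIntegral_prod _ ((h.integrableOn_areaDensity hR).indicator hΓS)]
        simp only [Measure.restrict_univ]
    _ = ∫ t in 0..P, ∫ y in {y | Γ (t, y) ∈ S}, areaDensity R ω a b Γ (t, y) := by
        rw [intervalIntegral.integral_of_le h.period_pos.le, integral_Ico_eq_integral_Ioc]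
        exact integral_congr_ae (.of_forall fun t =>
          integral_indicator (s := {y | Γ (t, y) ∈ S}) (measurable_prodMk_left hΓS))

end IsLevelChart

/-! ### Smooth families -/

section Families

variable {E F : Type*} [NormedAddCommGroup E] [NormedSpace ℝ E] [NormedAddCommGroup F]
  [NormedSpace ℝ F] {W : ℝ → E → F} {ν : E → F}

lemma eq_fderiv_of_hasDerivAt_family (hW : Differentiable ℝ fun p : ℝ × E => W p.1 p.2)
    (hν : ∀ x, HasDerivAt (fun ε => W ε x) (ν x) 0) (x : E) :
    ν x = fderiv ℝ (fun p : ℝ × E => W p.1 p.2) (0, x) (1, 0) :=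
  (hν x).unique (hasDerivAt_prodMk_left (p := (0, x)) (hW _))

lemma contDiff_of_hasDerivAt_family (hW : ContDiff ℝ ∞ fun p : ℝ × E => W p.1 p.2)
    (hν : ∀ x, HasDerivAt (fun ε => W ε x) (ν x) 0) : ContDiff ℝ ∞ ν := by
  rw [funext (eq_fderiv_of_hasDerivAt_family (hW.differentiable (by simp)) hν)]
  exact ((hW.fderiv_right (by simp)).comp (contDiff_prodMk_right 0)).clm_apply contDiff_const

lemma exists_norm_family_sub_le (hW : ContDiff ℝ 1 fun p : ℝ × E => W p.1 p.2) {K : Set E}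
    (hK : IsCompact K) :
    ∃ C, 0 ≤ C ∧ ∀ ε, |ε| ≤ 1 → ∀ x ∈ K, ‖W ε x - W 0 x‖ ≤ C * |ε| := by
  have hcont : Continuous fun p => fderiv ℝ (fun p : ℝ × E => W p.1 p.2) p (1, 0) :=
    (hW.continuous_fderiv one_ne_zero).clm_apply continuous_const
  obtain ⟨C, hC⟩ := ((isCompact_Icc (a := (-1 : ℝ)) (b := 1)).prod
    hK).exists_bound_of_continuousOn hcont.continuousOn
  refine ⟨max C 0, le_max_right _ _, fun ε hε x hx => ?_⟩
  have hderiv : ∀ s ∈ Icc (-1 : ℝ) 1, HasDerivWithinAt (fun ε => W ε x)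
      (fderiv ℝ (fun p : ℝ × E => W p.1 p.2) (s, x) (1, 0)) (Icc (-1) 1) s := fun s _ =>
    (hasDerivAt_prodMk_left (p := (s, x))
      (hW.differentiable one_ne_zero _)).hasDerivWithinAt
  simpa using (convex_Icc (-1 : ℝ) 1).norm_image_sub_le_of_norm_hasDerivWithin_le hderiv
    (fun s hs => (hC (s, x) ⟨hs, hx⟩).trans (le_max_left _ _)) (x := 0) (by simp) (abs_le.1 hε)

lemma eventually_norm_family_sub_sub_le (hW : ContDiff ℝ 1 fun p : ℝ × E => W p.1 p.2)
    (hν : ∀ x, HasDerivAt (fun ε => W ε x) (ν x) 0) (x₀ : E) {η : ℝ} (hη : 0 < η) :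
    ∀ᶠ p : ℝ × E in 𝓝 (0, x₀), ‖W p.1 p.2 - W 0 p.2 - p.1 • ν x₀‖ ≤ η * |p.1| := by
  have hstrict := Asymptotics.isLittleO_iff.1
    (hW.contDiffAt.hasStrictFDerivAt (x := (0, x₀)) one_ne_zero).isLittleO hη
  have hpair : Continuous fun p : ℝ × E => (p, ((0 : ℝ), p.2)) := by fun_prop
  filter_upwards [(hpair.tendsto (0, x₀)).eventually hstrict] with p hp
  have hsub : p - ((0 : ℝ), p.2) = p.1 • ((1 : ℝ), (0 : E)) := by ext <;> simp
  rw [hsub, map_smul, ← eq_fderiv_of_hasDerivAt_family (hW.differentiable one_ne_zero) hν,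
    norm_smul] at hp
  simpa [Prod.norm_def] using hp

end Families

lemma hasDerivAt_integral_of_norm_sub_le {α E : Type*} [MeasurableSpace α] {μ : Measure α}
    [NormedAddCommGroup E] [NormedSpace ℝ E] {F : ℝ → α → E} {F' : α → E} {bound : α → ℝ}
    {x₀ : ℝ} {s : Set ℝ} (hs : s ∈ 𝓝 x₀) (hF : ∀ x ∈ s, AEStronglyMeasurable (F x) μ)
    (hFint : Integrable (F x₀) μ) (hF' : AEStronglyMeasurable F' μ)
    (hlip : ∀ᵐ t ∂μ, ∀ x ∈ s, ‖F x t - F x₀ t‖ ≤ bound t * ‖x - x₀‖) (hbound : Integrable bound μ)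
    (hderiv : ∀ᵐ t ∂μ, HasDerivAt (F · t) (F' t) x₀) :
    HasDerivAt (fun x => ∫ t, F x t ∂μ) (∫ t, F' t ∂μ) x₀ := by
  obtain ⟨hint, hfderiv⟩ := hasFDerivAt_integral_of_dominated_loc_of_lip'
    (F' := fun t => ContinuousLinearMap.toSpanSingleton ℝ (F' t)) hs hF hFint
    ((ContinuousLinearMap.toSpanSingletonCLE (𝕜 := ℝ)).continuous.comp_aestronglyMeasurable hF')
    hlip hbound (hderiv.mono fun t ht => ht.hasFDerivAt)
  simpa [ContinuousLinearMap.integral_apply hint] using hfderiv.hasDerivAt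

/-! ### The derivative of the distribution function -/

theorem hasDerivAt_distribution_of_notMem {X : Type*} [TopologicalSpace X] [MeasurableSpace X]
    {μ : Measure X} {K R : Set X} {W : ℝ → X → ℝ} {lam : ℝ} (hK : IsCompact K) (hRK : R ⊆ K)
    (hW : Continuous fun p : ℝ × X => W p.1 p.2) (hlam : lam ∉ W 0 '' K) :
    HasDerivAt (fun ε => (μ {x ∈ R | W ε x < lam}).toReal) 0 0 := by
  have hlocal : ∀ x ∈ K, ∀ᶠ p : ℝ × X in 𝓝 (0, x), W p.1 p.2 < lam ↔ W 0 p.2 < lam := by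
    intro x hx
    have hW0 : Continuous fun p : ℝ × X => W 0 p.2 :=
      hW.comp (continuous_const.prodMk continuous_snd)
    obtain hlt | hgt := lt_or_gt_of_ne fun heq : W 0 x = lam => hlam ⟨x, hx, heq⟩
    · filter_upwards [hW.continuousAt.eventually_lt_const hlt,
        hW0.continuousAt.eventually_lt_const hlt] with p hp hp0
      exact iff_of_true hp hp0
    · filter_upwards [hW.continuousAt.eventually_const_lt hgt,
        hW0.continuousAt.eventually_const_lt hgt] with p hp hp0
      exact iff_of_false hp.not_gt hp0.not_gt
  refine (hasDerivAt_const 0 (μ {x ∈ R | W 0 x < lam}).toReal).congr_of_eventuallyEq ?_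
  filter_upwards [hK.eventually_forall_of_forall_eventually
    (P := fun ε x => W ε x < lam ↔ W 0 x < lam) hlocal] with ε hε
  rw [Set.ext fun x => and_congr_right fun hx => hε x (hRK hx)]

namespace IsLevelChart

variable {K R : Set E2} {ω ν : E2 → ℝ} {W : ℝ → E2 → ℝ} {a b P δ lam : ℝ} {Γ : ℝ × ℝ → E2}

lemma intervalIntegrable_setIntegral_areaDensity (h : IsLevelChart K ω a b P δ Γ)
    (hR : MeasurableSet R) {S : Set E2} (hS : MeasurableSet S) :
    IntervalIntegrable (fun t => ∫ y in {y | Γ (t, y) ∈ S}, areaDensity R ω a b Γ (t, y))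
      volume 0 P := by
  have hΓS : MeasurableSet (Γ ⁻¹' S) := h.contDiff_chart.continuous.measurable hS
  have hint : Integrable ((Γ ⁻¹' S).indicator (areaDensity R ω a b Γ))
      ((volume.restrict (Ico 0 P)).prod volume) := by
    simpa only [IntegrableOn, Measure.volume_eq_prod, ← Measure.prod_restrict,
      Measure.restrict_univ] using (h.integrableOn_areaDensity hR).indicator hΓS
  refine (intervalIntegrable_iff_integrableOn_Ico_of_le h.period_pos.le).2
    (hint.integral_prod_left.congr (.of_forall fun t => ?_))
  exact integral_indicator (s := {y | Γ (t, y) ∈ S}) (measurable_prodMk_left hΓS)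

lemma abs_apply_chart_sub_le (h : IsLevelChart K ω a b P δ Γ) (hRK : R ⊆ K) {V : E2 → ℝ} {r : ℝ}
    (hV : ∀ x ∈ K, |V x - ω x| ≤ r) {t y : ℝ} (hy : areaDensity R ω a b Γ (t, y) ≠ 0) :
    |V (Γ (t, y)) - y| ≤ r := by
  obtain ⟨hyR, hyI⟩ := mem_of_indicator_ne_zero hy
  simpa only [h.apply_chart t y (h.Icc_subset hyI)] using hV _ (hRK hyR)

lemma abs_setIntegral_areaDensity_sub_le (h : IsLevelChart K ω a b P δ Γ) (hR : MeasurableSet R)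
    (hRK : R ⊆ K) {Q : ℝ} (hQ : ∀ p, |areaDensity R ω a b Γ p| ≤ Q) {V : E2 → ℝ}
    (hV : Measurable V) {r : ℝ} (hr : 0 ≤ r) (hVω : ∀ x ∈ K, |V x - ω x| ≤ r) (t : ℝ) :
    |(∫ y in {y | V (Γ (t, y)) < lam}, areaDensity R ω a b Γ (t, y)) -
      ∫ y in Iio lam, areaDensity R ω a b Γ (t, y)| ≤ Q * (2 * r) := by
  have hVΓ : Measurable fun y => V (Γ (t, y)) :=
    hV.comp (h.contDiff_chart.continuous.comp (Continuous.prodMk_right t)).measurable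
  refine norm_setIntegral_sub_setIntegral_Iio_le (h.integrable_areaDensity hR t)
    (fun y => hQ (t, y)) (measurableSet_lt hVΓ measurable_const) hr fun y hy hfar => ?_
  have hclose := h.abs_apply_chart_sub_le hRK hVω hy
  simp only [mem_ofPred_eq]
  grind

lemma continuousAt_areaDensity (h : IsLevelChart K ω a b P δ Γ) (hR : IsOpen R) {t : ℝ}
    (hlam : lam ∈ Ioo a b) (htR : Γ (t, lam) ∈ R) :
    ContinuousAt (fun y => areaDensity R ω a b Γ (t, y)) lam := by
  have hΓ : Continuous fun y => Γ (t, y) :=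
    h.contDiff_chart.continuous.comp (Continuous.prodMk_right t)
  have hlam' := h.Icc_subset (Ioo_subset_Icc_self hlam)
  have hspeed : ContinuousAt (fun y => levelSpeed ω Γ (t, y)) lam :=
    (contDiffAt_levelSpeed h.contDiff h.contDiff_chart
      (h.gradient_chart_ne_zero t lam hlam')).continuousAt.comp (f := fun y => (t, y))
      (Continuous.prodMk_right t).continuousAt
  refine hspeed.congr ?_
  filter_upwards [isOpen_Ioo.mem_nhds hlam, hΓ.continuousAt (hR.mem_nhds htR)] with y hy hyR
  exact (indicator_of_mem (show (t, y) ∈ Γ ⁻¹' R ∩ Prod.snd ⁻¹' Icc a b from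
    ⟨hyR, Ioo_subset_Icc_self hy⟩) _).symm

/-- A chart point on the level `lam` outside `R` contributes nothing because `ν` vanishes there,
although the density may jump at such a point. -/
lemma hasDerivAt_setIntegral_areaDensity (h : IsLevelChart K ω a b P δ Γ) (hR : IsOpen R)
    (hRK : R ⊆ K) (hW : ContDiff ℝ 1 fun p : ℝ × E2 => W p.1 p.2) (hW0 : W 0 = ω)
    (hν : ∀ x, HasDerivAt (fun ε => W ε x) (ν x) 0) (hν0 : ∀ x ∈ K \ R, ν x = 0)
    (hlam : lam ∈ Icc a b) (t : ℝ) :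
    HasDerivAt (fun ε => ∫ y in {y | W ε (Γ (t, y)) < lam}, areaDensity R ω a b Γ (t, y))
      (-(levelSpeed ω Γ (t, lam) * ν (Γ (t, lam)))) 0 := by
  have hΓ : Continuous fun y => Γ (t, y) :=
    h.contDiff_chart.continuous.comp (Continuous.prodMk_right t)
  obtain ⟨Q, hQ⟩ := h.exists_abs_areaDensity_le (R := R)
  obtain ⟨C, -, hC⟩ := exists_norm_family_sub_le hW h.isCompact
  have hlam' := h.Icc_subset hlam
  have hexp : ∀ η > 0, ∀ᶠ p : ℝ × ℝ in 𝓝 (0, lam),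
      |W p.1 (Γ (t, p.2)) - p.2 - p.1 * ν (Γ (t, lam))| ≤ η * |p.1| := fun η hη => by
    have hpair : Continuous fun p : ℝ × ℝ => (p.1, Γ (t, p.2)) :=
      continuous_fst.prodMk (hΓ.comp continuous_snd)
    filter_upwards [(hpair.tendsto (0, lam)).eventually
      (eventually_norm_family_sub_sub_le hW hν (Γ (t, lam)) hη),
      continuous_snd.continuousAt (isOpen_Ioo.mem_nhds hlam')] with p hp hp2
    simpa only [hW0, h.apply_chart t p.2 hp2, smul_eq_mul, Real.norm_eq_abs] using hp
  have hcont : ν (Γ (t, lam)) = 0 ∨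
      ContinuousAt (fun y => areaDensity R ω a b Γ (t, y)) lam := by
    by_cases htR : Γ (t, lam) ∈ R
    · have hint := h.interior_eq.subset (interior_maximal hRK hR htR)
      rw [mem_ofPred_eq, h.apply_chart t lam hlam'] at hint
      exact .inr (h.continuousAt_areaDensity hR hint.2 htR)
    · exact .inl (hν0 _ ⟨h.chart_mem t lam hlam, htR⟩)
  have hvalue : levelSpeed ω Γ (t, lam) * ν (Γ (t, lam)) =
      areaDensity R ω a b Γ (t, lam) * ν (Γ (t, lam)) := by
    by_cases htR : Γ (t, lam) ∈ R
    · rw [areaDensity, indicator_of_mem (show (t, lam) ∈ Γ ⁻¹' R ∩ Prod.snd ⁻¹' Icc a b from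
        ⟨htR, hlam⟩)]
    · rw [hν0 _ ⟨h.chart_mem t lam hlam, htR⟩, mul_zero, mul_zero]
  rw [hvalue]
  exact hasDerivAt_setIntegral (h.integrable_areaDensity hR.measurableSet t)
    (fun y => hQ (t, y))
    (fun ε => (isOpen_lt (hW.continuous.comp (continuous_const.prodMk hΓ))
      continuous_const).measurableSet) hcont fun η hη =>
    eventually_lt_iff_lt_sub_mul (fun ε hε y hy => h.abs_apply_chart_sub_le hRK
      (hW0 ▸ hC ε hε) hy) hexp hη

theorem hasDerivAt_distribution (h : IsLevelChart K ω a b P δ Γ) (hR : IsOpen R) (hRK : R ⊆ K)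
    (hW : ContDiff ℝ ∞ fun p : ℝ × E2 => W p.1 p.2) (hW0 : W 0 = ω)
    (hν : ∀ x, HasDerivAt (fun ε => W ε x) (ν x) 0) (hν0 : ∀ x ∈ K \ R, ν x = 0)
    (hlam : lam ∈ Icc a b) :
    HasDerivAt (fun ε => (volume {x ∈ R | W ε x < lam}).toReal)
      (-∫ t in 0..P, levelSpeed ω Γ (t, lam) * ν (Γ (t, lam))) 0 := by
  have hcont : ∀ ε, Continuous (W ε) := fun ε => hW.continuous.comp (Continuous.prodMk_right ε)
  have hsub : ∀ ε, MeasurableSet {x | W ε x < lam} := fun ε =>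
    (isOpen_lt (hcont ε) continuous_const).measurableSet
  obtain ⟨Q, hQ⟩ := h.exists_abs_areaDensity_le (R := R)
  obtain ⟨C, hC0, hC⟩ := exists_norm_family_sub_le (hW.of_le (by simp)) h.isCompact
  set F : ℝ → ℝ → ℝ := fun ε t =>
    ∫ y in {y | W ε (Γ (t, y)) < lam}, areaDensity R ω a b Γ (t, y)
  have hvolume : ∀ ε, (volume {x ∈ R | W ε x < lam}).toReal = ∫ t in Ioc 0 P, F ε t := fun ε =>
    (h.volume_inter_eq_intervalIntegral hR.measurableSet hRK (hsub ε)).trans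
      (intervalIntegral.integral_of_le h.period_pos.le)
  have hF : ∀ ε, IntegrableOn (F ε) (Ioc 0 P) := fun ε =>
    (h.intervalIntegrable_setIntegral_areaDensity hR.measurableSet (hsub ε)).1
  have hF0 : ∀ t, F 0 t = ∫ y in Iio lam, areaDensity R ω a b Γ (t, y) := fun t => by
    simpa [sub_eq_zero, F] using h.abs_setIntegral_areaDensity_sub_le hR.measurableSet hRK hQ
      (hcont 0).measurable (lam := lam) le_rfl (fun x _ => by simp [hW0]) t
  have hlip : ∀ t, ∀ ε ∈ Icc (-1 : ℝ) 1, ‖F ε t - F 0 t‖ ≤ 2 * Q * C * ‖ε - 0‖ := fun t ε hε => by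
    rw [hF0, sub_zero, Real.norm_eq_abs ε]
    refine (h.abs_setIntegral_areaDensity_sub_le hR.measurableSet hRK hQ (hcont ε).measurable
      (by positivity) (hW0 ▸ hC ε (abs_le.2 hε)) t).trans_eq (by ring)
  have hF' : Continuous fun t => -(levelSpeed ω Γ (t, lam) * ν (Γ (t, lam))) :=
    ((h.continuous_levelSpeed (h.Icc_subset hlam)).mul
      ((contDiff_of_hasDerivAt_family hW hν).continuous.comp
        (h.contDiff_chart.continuous.comp (Continuous.prodMk_left lam)))).neg
  rw [← intervalIntegral.integral_neg, intervalIntegral.integral_of_le h.period_pos.le]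
  simp only [hvolume]
  exact hasDerivAt_integral_of_norm_sub_le (Icc_mem_nhds (by simp) one_pos)
    (fun ε _ => (hF ε).aestronglyMeasurable) (hF 0) hF'.aestronglyMeasurable
    (.of_forall hlip) (integrable_const _) (.of_forall
      (h.hasDerivAt_setIntegral_areaDensity hR hRK (hW.of_le (by simp)) hW0 hν hν0 hlam))

end IsLevelChart

namespace IsLevelChart

variable {K : Set E2} {ω ν : E2 → ℝ} {a b P δ : ℝ} {Γ : ℝ × ℝ → E2}

theorem forall_hasDerivAt_distribution_iff (h : IsLevelChart K ω a b P δ Γ) {R : Set E2}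
    {W : ℝ → E2 → ℝ} (hR : IsOpen R) (hRK : R ⊆ K) (hW : ContDiff ℝ ∞ fun p : ℝ × E2 => W p.1 p.2)
    (hW0 : W 0 = ω) (hν : ∀ x, HasDerivAt (fun ε => W ε x) (ν x) 0) (hν0 : ∀ x ∈ K \ R, ν x = 0) :
    (∀ lam, HasDerivAt (fun ε => (volume {x ∈ R | W ε x < lam}).toReal) 0 0) ↔
      ∀ y ∈ Icc a b, ∫ t in 0..P, levelSpeed ω Γ (t, y) * ν (Γ (t, y)) = 0 := by
  have hderiv := fun y (hy : y ∈ Icc a b) => h.hasDerivAt_distribution hR hRK hW hW0 hν hν0 hy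
  refine ⟨fun hzero y hy => neg_eq_zero.1 ((hderiv y hy).unique (hzero y)), fun hint lam => ?_⟩
  by_cases hlam : lam ∈ Icc a b
  · simpa only [hint lam hlam, neg_zero] using hderiv lam hlam
  · rw [← h.image_eq, ← hW0] at hlam
    exact hasDerivAt_distribution_of_notMem h.isCompact hRK hW.continuous hlam

theorem forall_intervalIntegral_eq_zero_iff (h : IsLevelChart K ω a b P δ Γ) {F : Set E2}
    (hFK : F ⊆ K) (hlc : ∀ x ∈ F, ∀ y ∈ connectedComponentIn F x, ω y = ω x)
    (hν : ContDiff ℝ ∞ ν) (hν0 : ∀ x ∈ F, ν x = 0) :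
    (∀ y ∈ Icc a b, ∫ t in 0..P, levelSpeed ω Γ (t, y) * ν (Γ (t, y)) = 0) ↔
      ∃ α : E2 → ℝ, ContDiff ℝ ∞ α ∧
        (∀ x ∈ F, ∀ y ∈ connectedComponentIn F x, α y = α x) ∧ ∀ x ∈ K, ν x = pb ω α x := by
  constructor
  · intro hint
    obtain ⟨α, hα, hνα⟩ := h.exists_pb_eq hν hint
    refine ⟨α, hα, fun x hx y hy => ?_, hνα⟩
    have hCF := connectedComponentIn_subset F x
    exact h.eq_of_isPreconnected hα isPreconnected_connectedComponentIn
      (fun z hz => ⟨hFK (hCF hz), hlc x hx z hz⟩)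
      (fun z hz => (hνα z (hFK (hCF hz))).symm.trans (hν0 z (hCF hz)))
      hy (mem_connectedComponentIn hx)
  · rintro ⟨α, hα, -, hνα⟩ y hy
    simpa only [fun t => hνα _ (h.chart_mem t y hy)] using
      h.intervalIntegral_levelSpeed_mul_pb hα (h.Icc_subset hy)

end IsLevelChart

theorem tangent_to_orbit_iff_distribution_function_fixed_general
    (Ω : Set E2) (hΩo : IsOpen Ω)
    (hann : ∃ Φ : E2 → E2, ContinuousOn Φ stdAnnulus ∧ InjOn Φ stdAnnulus ∧
      Φ '' stdAnnulus = closure Ω)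
    (ω : E2 → ℝ) (hω : ContDiff ℝ ∞ ω)
    (hcrit : ∀ x ∈ closure Ω, gradient ω x ≠ 0)
    (hωlc : ∀ x ∈ frontier Ω, ∀ y ∈ connectedComponentIn (frontier Ω) x, ω y = ω x)
    (W : ℝ → E2 → ℝ) (hW : ContDiff ℝ ∞ (fun p : ℝ × E2 => W p.1 p.2))
    (hW0 : W 0 = ω)
    (ν : E2 → ℝ) (hν : ∀ x, HasDerivAt (fun ε => W ε x) (ν x) 0)
    (hν0 : ∀ x ∈ frontier Ω, ν x = 0) :
    ((∀ lam : ℝ, HasDerivAt (fun ε => (volume {x ∈ Ω | W ε x < lam}).toReal) 0 0)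
        ↔ (∀ lam ∈ ω '' closure Ω,
            Jint Ω ω (fun x => ν x / ‖gradient ω x‖) lam = 0)) ∧
    ((∀ lam ∈ ω '' closure Ω,
        Jint Ω ω (fun x => ν x / ‖gradient ω x‖) lam = 0)
      ↔ (∃ α : E2 → ℝ, ContDiff ℝ ∞ α ∧
          (∀ x ∈ frontier Ω, ∀ y ∈ connectedComponentIn (frontier Ω) x, α y = α x) ∧
          ∀ x ∈ closure Ω, ν x = pb ω α x)) := by
  obtain ⟨Φ, hΦ, hinj, himage⟩ := hann
  have hlc : ∀ x ∈ frontier (closure Ω), ∀ y ∈ connectedComponentIn (frontier (closure Ω)) x,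
      ω y = ω x := fun x hx y hy =>
    hωlc x (frontier_closure_subset hx) y (connectedComponentIn_mono x frontier_closure_subset hy)
  obtain ⟨a, b, hannular⟩ := exists_isAnnularFunction hΦ hinj himage hω hcrit hlc
  obtain ⟨P, δ, Γ, h⟩ := hannular.exists_isLevelChart
  have hν_smooth : ContDiff ℝ ∞ ν := contDiff_of_hasDerivAt_family hW hν
  have hJint : (∀ lam ∈ ω '' closure Ω, Jint Ω ω (fun x => ν x / ‖gradient ω x‖) lam = 0) ↔
      ∀ y ∈ Icc a b, ∫ t in 0..P, levelSpeed ω Γ (t, y) * ν (Γ (t, y)) = 0 := by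
    rw [h.image_eq]
    exact forall₂_congr fun y hy => by
      rw [Jint, h.setIntegral_level_div_norm_gradient hν_smooth.continuous.measurable hy]
  rw [hJint]
  exact ⟨h.forall_hasDerivAt_distribution_iff hΩo subset_closure hW hW0 hν
    (hΩo.frontier_eq ▸ hν0), h.forall_intervalIntegral_eq_zero_iff frontier_subset_closure hωlc
    hν_smooth hν0⟩

/-- For Ω diffeomorphic to an annulus and ω without critical points, locally
constant on ∂Ω: the ε-derivative of the distribution function A_{ω_ε} vanishes
at ε = 0 iff ∫_{ω=λ} ν/|∇ω| dl = 0 for all λ in the range of ω, iff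
ν = {ω, α} for some stream function α constant on each boundary component. -/
theorem tangent_to_orbit_iff_distribution_function_fixed
    (Ω : Set E2) (hΩo : IsOpen Ω) (hΩb : Bornology.IsBounded Ω)
    (hann : ∃ Φ : E2 → E2, ContDiff ℝ (⊤ : ℕ∞) Φ ∧ InjOn Φ stdAnnulus ∧
      Φ '' stdAnnulus = closure Ω)
    (ω : E2 → ℝ) (hω : ContDiff ℝ (⊤ : ℕ∞) ω)
    (hcrit : ∀ x ∈ closure Ω, gradient ω x ≠ 0)
    (hωlc : ∀ x ∈ frontier Ω, ∀ y ∈ connectedComponentIn (frontier Ω) x, ω y = ω x)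
    (W : ℝ → E2 → ℝ) (hW : ContDiff ℝ (⊤ : ℕ∞) (fun p : ℝ × E2 => W p.1 p.2))
    (hW0 : W 0 = ω)
    (hWcrit : ∀ ε : ℝ, ∀ x ∈ closure Ω, gradient (W ε) x ≠ 0)
    (ν : E2 → ℝ) (hν : ∀ x, HasDerivAt (fun ε => W ε x) (ν x) 0)
    (hν0 : ∀ x ∈ frontier Ω, ν x = 0) :
    ((∀ lam : ℝ, HasDerivAt (fun ε => (volume {x ∈ Ω | W ε x < lam}).toReal) 0 0)
        ↔ (∀ lam ∈ ω '' closure Ω,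
            Jint Ω ω (fun x => ν x / ‖gradient ω x‖) lam = 0)) ∧
    ((∀ lam ∈ ω '' closure Ω,
        Jint Ω ω (fun x => ν x / ‖gradient ω x‖) lam = 0)
      ↔ (∃ α : E2 → ℝ, ContDiff ℝ (⊤ : ℕ∞) α ∧
          (∀ x ∈ frontier Ω, ∀ y ∈ connectedComponentIn (frontier Ω) x, α y = α x) ∧
          ∀ x ∈ closure Ω, ν x = pb ω α x)) := by
  obtain ⟨Φ, hΦ, hinj, himage⟩ := hann
  exact tangent_to_orbit_iff_distribution_function_fixed_general Ω hΩo
    ⟨Φ, hΦ.continuous.continuousOn, hinj, himage⟩ ω hω hcrit hωlc W hW hW0 ν hν hν0
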